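/- arXiv:1803.06118 — 9 statements merged into one kernel-verified Lean document; each statement's English description precedes it below -/
import Mathlib

section
/- For every integer n ≥ 1 and every ν > 0, the map K(π,σ) = exp(−ν·d_τ(π,σ)) is a strictly positive definite kernel on the symmetric group S_n: for every N and every pairwise distinct π_1,…,π_N ∈ S_n, the N×N matrix (exp(−ν·d_τ(π_i,π_j)))_{1≤i,j≤N} is positive definite. Consequently, for all θ_1,θ_2 > 0 the kernel K^τ_{θ_1,θ_2}(π,σ) = θ_2·exp(−θ_1·d_τ(π,σ)) is strictly positive definite on S_n. -/
/-!
Each permutation is encoded by its rank table, a Boolean vector indexed by pairs of positions;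
the encoding is injective and turns Kendall's tau distance into the Hamming distance. With
`q = exp (-ν) ∈ (0, 1)` the kernel is therefore a product over coordinates of the factors
`q + (1 - q) * [a p = b p]`. Expanding this product over subsets `t` of coordinates gives a
combination with positive coefficients of the kernels `[a and b agree on t]`, each of which is
positive semidefinite, being a submatrix of an identity matrix. For `t` the set of all coordinates
that matrix is the identity on distinct points, hence the sum is positive definite
(`posDef_hammingKernel`).
-/

/-- Kendall's tau distance on the symmetric group `S_n`:
the number of pairs `i < j` on which the permutations disagree in ranking. -/
def kendallTau {n : ℕ} (π σ : Equiv.Perm (Fin n)) : ℕ :=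
  ((Finset.univ : Finset (Fin n × Fin n)).filter fun p =>
    p.1 < p.2 ∧ ((σ p.2 < σ p.1 ∧ π p.1 < π p.2) ∨ (σ p.1 < σ p.2 ∧ π p.2 < π p.1))).card

/-- A symmetric map `K : E × E → ℝ` is a strictly positive definite kernel if for every `N`
and pairwise distinct `x_1, …, x_N` the matrix `(K (x_i) (x_j))` is positive definite. -/
def StrictPosDefKernel {E : Type*} (K : E → E → ℝ) : Prop :=
  ∀ (N : ℕ) (x : Fin N → E), Function.Injective x →
    (Matrix.of fun i j : Fin N => K (x i) (x j)).PosDef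

/-- The matrix `[g i = g j]` is a submatrix of the identity matrix. -/
lemma posSemidef_eqKernel {ι β : Type*} [DecidableEq β] (g : ι → β) :
    (Matrix.of fun i j : ι => if g i = g j then (1 : ℝ) else 0).PosSemidef := by
  have h := (Matrix.PosSemidef.one (n := β) (R := ℝ)).submatrix g
  convert h using 1
  ext i j
  simp [Matrix.one_apply]

/-- Strict positive definiteness of the kernel `q ^ (Hamming distance)` for `0 < q < 1`, written as
a product over coordinates. -/
lemma posDef_hammingKernel {ι P : Type*} [Finite ι] [Fintype P] [DecidableEq P]
    (f : ι → P → Bool) (hf : Function.Injective f) {q : ℝ} (hq₀ : 0 < q) (hq₁ : q < 1) :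
    (Matrix.of fun i j : ι => ∏ p, (if f i p = f j p then (1 : ℝ) else q)).PosDef := by
  classical
  -- `E t` is the kernel `[f i and f j agree on t]`; coordinates outside `t` are blanked.
  let E : Finset P → Matrix ι ι ℝ := fun t => Matrix.of fun i j =>
    if (fun p => if p ∈ t then f i p else false) = (fun p => if p ∈ t then f j p else false)
    then (1 : ℝ) else 0
  let c : Finset P → ℝ := fun t => (1 - q) ^ t.card * q ^ (Finset.univ \ t).card
  have hc : ∀ t, 0 < c t := fun t =>
    mul_pos (pow_pos (sub_pos.2 hq₁) _) (pow_pos hq₀ _)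
  have hE : ∀ t, (E t).PosSemidef := fun t => posSemidef_eqKernel _
  have hE_univ : E Finset.univ = 1 := by
    ext i j
    simp [E, Matrix.one_apply, hf.eq_iff]
  have expand : (Matrix.of fun i j : ι => ∏ p, (if f i p = f j p then (1 : ℝ) else q)) =
      ∑ t ∈ (Finset.univ : Finset P).powerset, c t • E t := by
    ext i j
    have h1 : ∀ p, (if f i p = f j p then (1 : ℝ) else q) =
        (1 - q) * (if f i p = f j p then 1 else 0) + q := by
      intro p; split_ifs <;> ring
    simp only [Matrix.of_apply, h1, Finset.prod_add, Matrix.sum_apply, Matrix.smul_apply,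
      smul_eq_mul]
    refine Finset.sum_congr rfl fun t _ => ?_
    have h2 : ∏ p ∈ t, (if f i p = f j p then (1 : ℝ) else 0) = E t i j := by
      rw [Finset.prod_ite_zero, Finset.prod_const_one]
      simp only [E, Matrix.of_apply, funext_iff]
      congr 1
      refine propext (forall_congr' fun p => ?_)
      by_cases hp : p ∈ t <;> simp [hp]
    rw [Finset.prod_mul_distrib, h2, Finset.prod_const, Finset.prod_const]
    simp only [c]
    ring
  rw [expand, ← Finset.add_sum_erase _ _ (Finset.mem_powerset_self _), hE_univ]
  exact (Matrix.PosDef.one.smul (hc _)).add_posSemidef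
    (Matrix.posSemidef_sum _ fun t _ => (hE t).smul (hc t).le)

/-- The rank table of a permutation: the coordinate `(i, j)` records whether `i < j` and
`π i < π j`. Coordinates with `j ≤ i` are constantly `false`. -/
def rankTable {n : ℕ} (π : Equiv.Perm (Fin n)) (p : Fin n × Fin n) : Bool :=
  decide (p.1 < p.2 ∧ π p.1 < π p.2)

lemma rankTable_injective (n : ℕ) : Function.Injective (rankTable (n := n)) := by
  intro π σ h
  have key : ∀ i j, π i < π j → σ i < σ j := by
    intro i j hij
    rcases lt_trichotomy i j with hlt | rfl | hgt
    · have := congrFun h (i, j)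
      simp only [rankTable, decide_eq_decide] at this
      exact (this.1 ⟨hlt, hij⟩).2
    · exact absurd hij (lt_irrefl _)
    · have := congrFun h (j, i)
      simp only [rankTable, decide_eq_decide] at this
      have hne : σ i ≠ σ j := fun e => hgt.ne' (σ.injective e)
      exact lt_of_le_of_ne (not_lt.1 fun hs => hij.asymm (this.2 ⟨hgt, hs⟩).2) hne
  -- `σ ∘ π⁻¹` is an increasing bijection of `Fin n`, hence the identity.
  have hmono : StrictMono (π.symm.trans σ) := fun a b hab => key _ _ (by simpa using hab)
  have hid : ⇑(π.symm.trans σ) = id :=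
    (hmono.range_inj strictMono_id).1
      (by rw [(π.symm.trans σ).surjective.range_eq, Set.range_id])
  ext i
  have := congrFun hid (π i)
  simp only [Equiv.trans_apply, Equiv.symm_apply_apply, id] at this
  rw [this]

/-- Kendall's tau distance is the Hamming distance of rank tables. -/
lemma kendallTau_eq_card {n : ℕ} (π σ : Equiv.Perm (Fin n)) :
    kendallTau π σ =
      (Finset.univ.filter fun p => ¬ rankTable π p = rankTable σ p).card := by
  unfold kendallTau
  congr 1
  ext p
  simp only [Finset.mem_filter, Finset.mem_univ, true_and, rankTable, decide_eq_decide]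
  by_cases hp : p.1 < p.2
  · have h1 : π p.1 ≠ π p.2 := fun e => hp.ne (π.injective e)
    have h2 : σ p.1 ≠ σ p.2 := fun e => hp.ne (σ.injective e)
    grind
  · simp [hp]

lemma strictPosDefKernel_exp_kendallTau (n : ℕ) (ν : ℝ) (hν : 0 < ν) :
    StrictPosDefKernel (fun π σ : Equiv.Perm (Fin n) =>
      Real.exp (-ν * (kendallTau π σ : ℝ))) := by
  intro N x hx
  have h := posDef_hammingKernel (fun i => rankTable (x i))
    ((rankTable_injective n).comp hx) (Real.exp_pos (-ν)) (Real.exp_lt_one_iff.mpr (neg_lt_zero.2 hν))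
  convert h using 1
  ext i j
  simp only [Matrix.of_apply]
  rw [Finset.prod_ite, Finset.prod_const_one, Finset.prod_const, one_mul, kendallTau_eq_card,
    ← Real.exp_nat_mul, mul_comm]

theorem kendall_kernel_strictly_pos_def (n : ℕ) (hn : 1 ≤ n) (ν : ℝ) (hν : 0 < ν) :
    StrictPosDefKernel (fun π σ : Equiv.Perm (Fin n) =>
      Real.exp (-ν * (kendallTau π σ : ℝ))) ∧
    ∀ θ₁ θ₂ : ℝ, 0 < θ₁ → 0 < θ₂ →
      StrictPosDefKernel (fun π σ : Equiv.Perm (Fin n) =>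
        θ₂ * Real.exp (-θ₁ * (kendallTau π σ : ℝ))) := by
  refine ⟨strictPosDefKernel_exp_kendallTau n ν hν, fun θ₁ θ₂ h₁ h₂ N x hx => ?_⟩
  exact (strictPosDefKernel_exp_kendallTau n θ₁ h₁ N x hx).smul h₂
end

section
/- For every integer n ≥ 1 and every ν > 0, the map K(π,σ) = exp(−ν·d_H(π,σ)) is a strictly positive definite kernel on the symmetric group S_n: for every N and every pairwise distinct π_1,…,π_N ∈ S_n, the N×N matrix (exp(−ν·d_H(π_i,π_j)))_{1≤i,j≤N} is positive definite. -/
/-!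
Write `q = exp (-ν) ∈ (0, 1)`. Then `exp (-ν d_H(π, σ)) = ∏ i, M (π i) (σ i)`, where `M` is the
matrix with diagonal entries `1` and off-diagonal entries `q`. Since `M = (1 - q) I + q J` with `J`
the all-ones matrix, `M` is positive definite. Its `n`-fold Kronecker power, indexed by all words
`Fin n → Fin n`, is therefore positive definite (`posDef_pi_prod`). Distinct permutations are
distinct words, so the kernel matrix is a principal submatrix of this power.
-/

/-- Hamming distance on the symmetric group `S_n`. -/
def permHammingDist {n : ℕ} (π σ : Equiv.Perm (Fin n)) : ℕ :=
  (Finset.univ.filter fun i : Fin n => π i ≠ σ i).card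

open scoped Kronecker in
/-- The `k`-fold Kronecker power of a positive definite matrix, indexed by words of length `k`. -/
lemma posDef_pi_prod {m : Type*} [Fintype m] {M : Matrix m m ℝ} (hM : M.PosDef) (k : ℕ) :
    (Matrix.of fun f g : Fin k → m => ∏ i, M (f i) (g i)).PosDef := by
  classical
  induction k with
  | zero =>
    have h : (Matrix.of fun f g : Fin 0 → m => ∏ i, M (f i) (g i)) = 1 := by
      ext f g
      rw [Subsingleton.elim f g]
      simp
    rw [h]
    exact Matrix.PosDef.one
  | succ k ih =>
    have h : (Matrix.of fun f g : Fin (k + 1) → m => ∏ i, M (f i) (g i)) =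
        (M ⊗ₖ (Matrix.of fun f g : Fin k → m => ∏ i, M (f i) (g i))).submatrix
          (fun f => (f 0, Fin.tail f)) (fun f => (f 0, Fin.tail f)) := by
      ext f g
      simp [Fin.prod_univ_succ, Fin.tail]
    rw [h]
    refine (hM.kronecker ih).submatrix ?_
    intro f g hfg
    rw [Prod.mk.injEq] at hfg
    rw [← Fin.cons_self_tail f, ← Fin.cons_self_tail g, hfg.1, hfg.2]

lemma posDef_one_or_const {m : Type*} [Fintype m] [DecidableEq m] {q : ℝ} (hq : 0 < q)
    (hq1 : q < 1) : (Matrix.of fun a b : m => if a = b then 1 else q).PosDef := by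
  have h : (Matrix.of fun a b : m => if a = b then 1 else q) =
      Matrix.diagonal (fun _ : m => 1 - q) +
        q • Matrix.vecMulVec (fun _ : m => (1 : ℝ)) (star fun _ : m => (1 : ℝ)) := by
    ext a b
    by_cases hab : a = b <;> simp [hab, Matrix.vecMulVec]
  rw [h]
  exact (Matrix.PosDef.diagonal fun _ => sub_pos.2 hq1).add_posSemidef
    ((Matrix.posSemidef_vecMulVec_self_star _).smul hq.le)

theorem hamming_kernel_strictly_pos_def (n : ℕ) (hn : 1 ≤ n) (ν : ℝ) (hν : 0 < ν) :
    StrictPosDefKernel (fun π σ : Equiv.Perm (Fin n) =>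
      Real.exp (-ν * (permHammingDist π σ : ℝ))) := by
  intro N x hx
  have hM : (Matrix.of fun a b : Fin n => if a = b then 1 else Real.exp (-ν)).PosDef :=
    posDef_one_or_const (Real.exp_pos _) (Real.exp_lt_one_iff.2 (neg_lt_zero.2 hν))
  have h := (posDef_pi_prod hM n).submatrix (e := fun i : Fin N => (x i : Fin n → Fin n))
    (fun i j hij => hx (DFunLike.coe_injective hij))
  convert h using 1
  ext i j
  simp only [Matrix.of_apply, Matrix.submatrix_apply]
  rw [Finset.prod_ite, Finset.prod_const_one, one_mul, Finset.prod_const, ← Real.exp_nat_mul,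
    permHammingDist, mul_comm]
end

section
/- For every integer n ≥ 1 and every ν > 0, the map K(π,σ) = exp(−ν·d_S(π,σ)) is a strictly positive definite kernel on the symmetric group S_n: for every N and every pairwise distinct π_1,…,π_N ∈ S_n, the N×N matrix (exp(−ν·d_S(π_i,π_j)))_{1≤i,j≤N} is positive definite. -/
/-!
The exponential of the footrule distance factors over coordinates:
`exp (-ν d(π, σ)) = ∏ i, r ^ |π i - σ i|` with `r = exp (-ν) ∈ (0, 1)`.

The one-coordinate matrix `(r ^ |a - b|)` on `Fin n` has the explicit factorization `L D Lᵀ`,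
where `L a k = r ^ (a - k)` for `k ≤ a` (and `0` otherwise) is unitriangular and `D` is diagonal
with positive entries `1, 1 - r², 1 - r², …`; so it is positive definite (`posDef_geom`).
Kronecker products of positive definite matrices are positive definite, hence so is the product
kernel on all functions `Fin m → Fin n` (`posDef_prod`). The kernel matrix at pairwise distinct
permutations is a principal submatrix of the latter.
-/

/-- Spearman's footrule distance on the symmetric group `S_n`. -/
def spearmanFootrule {n : ℕ} (π σ : Equiv.Perm (Fin n)) : ℕ :=
  ∑ i : Fin n, ((π i : ℤ) - (σ i : ℤ)).natAbs

/-- The diagonal entries of `D` in the factorization `L D Lᵀ` of `(r ^ |a - b|)`. -/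
def geomWeight (r : ℝ) (k : ℕ) : ℝ := if k = 0 then 1 else 1 - r ^ 2

/-- The factor `Lᵀ` in the factorization `L D Lᵀ` of `(r ^ |a - b|)`; it is upper unitriangular. -/
def geomFactor (r : ℝ) (n : ℕ) : Matrix (Fin n) (Fin n) ℝ :=
  Matrix.of fun k a => if (k : ℕ) ≤ a then r ^ ((a : ℕ) - k) else 0

theorem sum_geomWeight (r : ℝ) (a b : ℕ) (hab : a ≤ b) :
    ∑ k ∈ Finset.range (a + 1), r ^ (a - k) * geomWeight r k * r ^ (b - k) = r ^ (b - a) := by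
  induction a with
  | zero => simp [geomWeight]
  | succ a ih =>
    rw [Finset.sum_range_succ]
    have h1 : ∑ k ∈ Finset.range (a + 1), r ^ (a + 1 - k) * geomWeight r k * r ^ (b - k)
        = r * r ^ (b - a) := by
      rw [← ih (by omega), Finset.mul_sum]
      refine Finset.sum_congr rfl fun k hk => ?_
      have hk' : a + 1 - k = (a - k) + 1 := by
        have := Finset.mem_range.1 hk
        omega
      rw [hk', pow_succ]
      ring
    have h2 : b - a = (b - (a + 1)) + 1 := by omega
    rw [h1, h2, pow_succ]
    simp only [geomWeight, Nat.succ_ne_zero, if_false, Nat.sub_self, pow_zero]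
    ring

theorem geomFactor_entry (r : ℝ) (n : ℕ) (a b : Fin n) (hab : a ≤ b) :
    ∑ k, geomFactor r n k a * geomWeight r k * geomFactor r n k b = r ^ ((b : ℕ) - a) := by
  rw [← sum_geomWeight r a b hab]
  simp only [geomFactor, Matrix.of_apply]
  rw [Fin.sum_univ_eq_sum_range (fun k => (if k ≤ (a : ℕ) then r ^ ((a : ℕ) - k) else 0) *
    geomWeight r k * (if k ≤ (b : ℕ) then r ^ ((b : ℕ) - k) else 0)) n]
  symm
  have hsub : Finset.range ((a : ℕ) + 1) ⊆ Finset.range n := by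
    intro k hk
    have := a.2
    simp only [Finset.mem_range] at hk ⊢
    omega
  have hab' : (a : ℕ) ≤ b := hab
  rw [← Finset.sum_subset hsub]
  · refine Finset.sum_congr rfl fun k hk => ?_
    have := Finset.mem_range.1 hk
    rw [if_pos (by omega), if_pos (by omega)]
  · intro k _ hk
    have : ¬ k ≤ (a : ℕ) := by
      simp only [Finset.mem_range] at hk
      omega
    simp [this]

theorem posDef_geom (r : ℝ) (h0 : 0 < r) (h1 : r < 1) (n : ℕ) :
    (Matrix.of fun a b : Fin n => r ^ ((a : ℤ) - (b : ℤ)).natAbs).PosDef := by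
  have hD : (Matrix.diagonal fun k : Fin n => geomWeight r k).PosDef := by
    refine Matrix.PosDef.diagonal fun k => ?_
    unfold geomWeight
    split_ifs
    · exact one_pos
    · nlinarith
  have hinj : Function.Injective (geomFactor r n).mulVec := by
    rw [Matrix.mulVec_injective_iff_isUnit, Matrix.isUnit_iff_isUnit_det,
      Matrix.det_of_isUpperTriangular]
    · simp [geomFactor]
    · intro k a hka
      have : ¬ (k : ℕ) ≤ a := not_le.2 hka
      simp only [geomFactor, Matrix.of_apply, if_neg this]
  convert hD.conjTranspose_mul_mul_same hinj using 1
  ext a b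
  rw [Matrix.mul_apply]
  simp only [Matrix.mul_diagonal, Matrix.conjTranspose_apply, star_trivial, Matrix.of_apply]
  rcases le_total a b with hab | hab
  · have hab' : (a : ℕ) ≤ b := hab
    rw [geomFactor_entry r n a b hab]
    congr 1
    omega
  · have hab' : (b : ℕ) ≤ a := hab
    have h := geomFactor_entry r n b a hab
    calc r ^ ((a : ℤ) - (b : ℤ)).natAbs = r ^ ((a : ℕ) - b) := by congr 1; omega
      _ = _ := h.symm
      _ = _ := Finset.sum_congr rfl fun k _ => by ring

/-- Tensor powers of a positive definite matrix are positive definite, the index set of the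
`m`-th power being the functions `Fin m → ι`. -/
theorem posDef_prod {ι : Type*} [Fintype ι] (A : Matrix ι ι ℝ) (hA : A.PosDef)
    (m : ℕ) : (Matrix.of fun f g : Fin m → ι => ∏ i, A (f i) (g i)).PosDef := by
  classical
  induction m with
  | zero =>
    convert (Matrix.PosDef.one : (1 : Matrix (Fin 0 → ι) (Fin 0 → ι) ℝ).PosDef) using 1
    ext f g
    obtain rfl := Subsingleton.elim f g
    simp
  | succ m ih =>
    have hinj : Function.Injective (fun f : Fin (m + 1) → ι => (f 0, Fin.tail f)) := by
      intro f g h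
      obtain ⟨h0, ht⟩ := Prod.mk.inj h
      rw [← Fin.cons_self_tail f, ← Fin.cons_self_tail g, h0, ht]
    have h := (hA.kronecker ih).submatrix hinj
    have heq : (Matrix.of fun f g : Fin (m + 1) → ι => ∏ i, A (f i) (g i)) =
        (Matrix.kroneckerMap (fun x y => x * y) A
          (Matrix.of fun f g : Fin m → ι => ∏ i, A (f i) (g i))).submatrix
          (fun f => (f 0, Fin.tail f)) (fun f => (f 0, Fin.tail f)) := by
      ext f g
      simp [Fin.prod_univ_succ, Fin.tail, Matrix.kroneckerMap_apply]
    rw [heq]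
    exact h

theorem spearman_footrule_kernel_strictly_pos_def (n : ℕ) (hn : 1 ≤ n) (ν : ℝ) (hν : 0 < ν) :
    StrictPosDefKernel (fun π σ : Equiv.Perm (Fin n) =>
      Real.exp (-ν * (spearmanFootrule π σ : ℝ))) := by
  intro N x hx
  have hA := posDef_geom (Real.exp (-ν)) (Real.exp_pos _) (by simpa using hν) n
  have hinj : Function.Injective (fun (i : Fin N) => (x i : Fin n → Fin n)) :=
    fun i j h => hx (DFunLike.coe_injective h)
  convert (posDef_prod _ hA n).submatrix hinj using 1
  ext i j
  simp only [Matrix.of_apply, Matrix.submatrix_apply, spearmanFootrule]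
  rw [Finset.prod_pow_eq_pow_sum, ← Real.exp_nat_mul, mul_comm]
end

section
/- For every integer n ≥ 1 and every ν > 0, the map K(π,σ) = exp(−ν·d_{S2}(π,σ)) is a strictly positive definite kernel on the symmetric group S_n: for every N and every pairwise distinct π_1,…,π_N ∈ S_n, the N×N matrix (exp(−ν·d_{S2}(π_i,π_j)))_{1≤i,j≤N} is positive definite. -/
/-!
For permutations `π, σ` let `⟨π, σ⟩ = ∑ i, (π i + 1) (σ i + 1)`. All permutations have the same
squared norm `⟨π, π⟩ = R > 0`, so `d(π, σ) = 2 R - 2 ⟨π, σ⟩` and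
`exp (-ν d(π, σ)) = exp (-2 ν R) * exp (2 ν ⟨π, σ⟩)`. It remains to see that the entrywise
exponential of the Gram matrix `G = (2 ν ⟨π_i, π_j⟩)` is positive definite
(`posDef_entrywise_exp`).

The quadratic form of the entrywise exponential is `∑ k, qₖ(c) / k!`, where `qₖ` is the quadratic
form of the `k`-th entrywise power of `G`, which is nonnegative by the Schur product theorem.
Since `G` has constant diagonal `r > 0` and off-diagonal entries in `(-r, r)`, the `k`-th entrywise
power of `G / r` tends to the identity, so `qₖ(c) / r ^ k → ∑ i, c i ^ 2`. Hence for `c ≠ 0` some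
term of the series is positive, and so is the sum.
-/

/-- Spearman's rank correlation distance on the symmetric group `S_n`. -/
def spearmanRankCorr {n : ℕ} (π σ : Equiv.Perm (Fin n)) : ℕ :=
  ∑ i : Fin n, ((π i : ℤ) - (σ i : ℤ)).natAbs ^ 2

open Filter Topology

/-- Entrywise powers of a positive semidefinite matrix are positive semidefinite, by iterating the
Schur product theorem; the zeroth power is the all-ones matrix. -/
lemma posSemidef_entrywise_pow {N : ℕ} {G : Matrix (Fin N) (Fin N) ℝ} (hG : G.PosSemidef)
    (k : ℕ) : (Matrix.of fun i j => G i j ^ k).PosSemidef := by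
  induction k with
  | zero =>
    convert Matrix.posSemidef_vecMulVec_self_star (fun _ : Fin N => (1 : ℝ)) using 1
    ext i j
    simp [Matrix.vecMulVec_apply]
  | succ k ih =>
    have h : (Matrix.of fun i j => G i j ^ (k + 1))
        = (Matrix.of fun i j => G i j ^ k).hadamard G := by
      ext i j
      simp [pow_succ]
    rw [h]
    exact ih.hadamard hG

lemma star_dotProduct_mulVec_eq_sum {N : ℕ} (A : Matrix (Fin N) (Fin N) ℝ) (c : Fin N → ℝ) :
    star c ⬝ᵥ (A.mulVec c) = ∑ i, ∑ j, c i * c j * A i j := by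
  simp only [dotProduct, Matrix.mulVec, Finset.mul_sum, Pi.star_apply, star_trivial]
  refine Finset.sum_congr rfl fun i _ => Finset.sum_congr rfl fun j _ => by ring

/-- The quadratic forms of the entrywise powers of `G / r` tend to that of the identity matrix when
`G` has diagonal `r` and off-diagonal entries of smaller absolute value. -/
lemma tendsto_quadForm_pow_div {N : ℕ} {G : Matrix (Fin N) (Fin N) ℝ} {r : ℝ} (hr : 0 < r)
    (hdiag : ∀ i, G i i = r) (hoff : ∀ i j, i ≠ j → |G i j| < r) (c : Fin N → ℝ) :
    Tendsto (fun k : ℕ => ∑ i, ∑ j, c i * c j * (G i j / r) ^ k) atTop (𝓝 (∑ i, c i ^ 2)) := by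
  have key : ∀ i j, Tendsto (fun k : ℕ => c i * c j * (G i j / r) ^ k) atTop
      (𝓝 (if i = j then c i * c j else 0)) := by
    intro i j
    split_ifs with h
    · subst h
      simp [hdiag, hr.ne']
    · have h1 : |G i j / r| < 1 := by
        rw [abs_div, abs_of_pos hr, div_lt_one hr]
        exact hoff i j h
      simpa using (tendsto_pow_atTop_nhds_zero_of_abs_lt_one h1).const_mul (c i * c j)
  have := tendsto_finsetSum Finset.univ fun i _ =>
    tendsto_finsetSum Finset.univ fun j _ => key i j
  simpa [pow_two] using this

/-- The entrywise exponential of a positive semidefinite matrix with constant positive diagonal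
that strictly dominates every off-diagonal entry is positive definite. -/
lemma posDef_entrywise_exp {N : ℕ} {G : Matrix (Fin N) (Fin N) ℝ} (hG : G.PosSemidef) {r : ℝ}
    (hr : 0 < r) (hdiag : ∀ i, G i i = r) (hoff : ∀ i j, i ≠ j → |G i j| < r) :
    (Matrix.of fun i j => Real.exp (G i j)).PosDef := by
  refine Matrix.PosDef.of_dotProduct_mulVec_pos ?_ fun c hc => ?_
  · ext i j
    simpa using hG.isHermitian.apply i j
  rw [star_dotProduct_mulVec_eq_sum]
  have hsum : HasSum (fun k : ℕ => ∑ i, ∑ j, c i * c j * (G i j ^ k / (k.factorial : ℝ)))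
      (∑ i, ∑ j, c i * c j * Real.exp (G i j)) := by
    refine hasSum_sum fun i _ => hasSum_sum fun j _ => HasSum.mul_left _ ?_
    rw [Real.exp_eq_exp_ℝ]
    exact NormedSpace.expSeries_div_hasSum_exp (G i j)
  have hterm : ∀ k : ℕ, ∑ i, ∑ j, c i * c j * (G i j ^ k / (k.factorial : ℝ))
      = (∑ i, ∑ j, c i * c j * G i j ^ k) / (k.factorial : ℝ) := by
    intro k
    simp only [Finset.sum_div, mul_div_assoc]
  have hnonneg : ∀ k : ℕ, 0 ≤ ∑ i, ∑ j, c i * c j * (G i j ^ k / (k.factorial : ℝ)) := by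
    intro k
    have h := (posSemidef_entrywise_pow hG k).dotProduct_mulVec_nonneg c
    rw [star_dotProduct_mulVec_eq_sum] at h
    rw [hterm]
    exact div_nonneg h (by positivity)
  have hc2 : 0 < ∑ i, c i ^ 2 := by
    obtain ⟨i, hi⟩ := Function.ne_iff.mp hc
    exact Finset.sum_pos' (fun _ _ => sq_nonneg _) ⟨i, Finset.mem_univ i, by
      have : c i ≠ 0 := hi
      positivity⟩
  obtain ⟨k, hk⟩ := ((tendsto_quadForm_pow_div hr hdiag hoff c).eventually_const_lt hc2).exists
  have hpos : 0 < ∑ i, ∑ j, c i * c j * (G i j ^ k / (k.factorial : ℝ)) := by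
    rw [hterm]
    simp only [div_pow, ← mul_div_assoc, ← Finset.sum_div] at hk
    have := (div_pos_iff_of_pos_right (pow_pos hr k)).mp hk
    positivity
  exact hpos.trans_le (le_hasSum hsum k fun m _ => hnonneg m)

/-- The vector `(π 1, …, π n)` with entries in `{1, …, n}`; the shift by one makes it nonzero also
for `n = 1`. -/
def rankVec {n : ℕ} (π : Equiv.Perm (Fin n)) (i : Fin n) : ℝ := ((π i : ℕ) : ℝ) + 1

lemma rankVec_sq_sum {n : ℕ} (π : Equiv.Perm (Fin n)) :
    ∑ i, rankVec π i * rankVec π i = ∑ i : Fin n, ((i : ℕ) + 1 : ℝ) ^ 2 := by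
  simp only [rankVec, ← pow_two]
  exact Equiv.sum_comp π fun i : Fin n => ((i : ℕ) + 1 : ℝ) ^ 2

lemma spearmanRankCorr_eq_sum {n : ℕ} (π σ : Equiv.Perm (Fin n)) :
    (spearmanRankCorr π σ : ℝ) = ∑ i, (rankVec π i - rankVec σ i) ^ 2 := by
  simp only [spearmanRankCorr, Nat.cast_sum, Nat.cast_pow, Nat.cast_natAbs, Int.cast_abs, sq_abs,
    rankVec]
  refine Finset.sum_congr rfl fun i _ => ?_
  push_cast
  ring

lemma spearmanRankCorr_eq_sub {n : ℕ} (π σ : Equiv.Perm (Fin n)) :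
    (spearmanRankCorr π σ : ℝ) = 2 * (∑ i : Fin n, ((i : ℕ) + 1 : ℝ) ^ 2)
      - 2 * ∑ i, rankVec π i * rankVec σ i := by
  have h : (spearmanRankCorr π σ : ℝ) = ∑ i, rankVec π i * rankVec π i
      + ∑ i, rankVec σ i * rankVec σ i - 2 * ∑ i, rankVec π i * rankVec σ i := by
    rw [spearmanRankCorr_eq_sum, Finset.mul_sum, ← Finset.sum_add_distrib,
      ← Finset.sum_sub_distrib]
    exact Finset.sum_congr rfl fun i _ => by ring
  rw [h, rankVec_sq_sum, rankVec_sq_sum]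
  ring

lemma spearmanRankCorr_pos {n : ℕ} {π σ : Equiv.Perm (Fin n)} (h : π ≠ σ) :
    (0 : ℝ) < spearmanRankCorr π σ := by
  obtain ⟨i, hi⟩ := DFunLike.ne_iff.mp h
  rw [spearmanRankCorr_eq_sum]
  refine Finset.sum_pos' (fun _ _ => sq_nonneg _) ⟨i, Finset.mem_univ i, ?_⟩
  have : rankVec π i - rankVec σ i ≠ 0 := by
    simpa [rankVec, sub_eq_zero, Fin.val_inj] using hi
  positivity

theorem spearman_rank_corr_kernel_strictly_pos_def (n : ℕ) (hn : 1 ≤ n) (ν : ℝ) (hν : 0 < ν) :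
    StrictPosDefKernel (fun π σ : Equiv.Perm (Fin n) =>
      Real.exp (-ν * (spearmanRankCorr π σ : ℝ))) := by
  intro N x hx
  set R : ℝ := ∑ i : Fin n, ((i : ℕ) + 1 : ℝ) ^ 2 with hR
  have hRpos : 0 < R :=
    Finset.sum_pos (fun i _ => by positivity) ⟨⟨0, hn⟩, Finset.mem_univ _⟩
  let V : Matrix (Fin N) (Fin n) ℝ := Matrix.of fun i a => rankVec (x i) a
  let G : Matrix (Fin N) (Fin N) ℝ := (2 * ν) • (V * V.conjTranspose)
  have hGapp : ∀ i j, G i j = 2 * ν * ∑ a, rankVec (x i) a * rankVec (x j) a := by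
    intro i j
    simp [G, V, Matrix.mul_apply]
  have hGpsd : G.PosSemidef :=
    (Matrix.posSemidef_self_mul_conjTranspose V).smul (by positivity)
  have hexp : (Matrix.of fun i j => Real.exp (G i j)).PosDef := by
    refine posDef_entrywise_exp hGpsd (r := 2 * ν * R) (by positivity) ?_ ?_
    · intro i
      rw [hGapp, rankVec_sq_sum]
    · intro i j hij
      have hd := spearmanRankCorr_pos (hx.ne hij)
      rw [spearmanRankCorr_eq_sub, ← hR] at hd
      have h0 : 0 ≤ ∑ a, rankVec (x i) a * rankVec (x j) a :=
        Finset.sum_nonneg fun a _ => by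
          unfold rankVec
          positivity
      rw [hGapp, abs_of_nonneg (by positivity)]
      exact mul_lt_mul_of_pos_left (by linarith) (by positivity)
  convert hexp.smul (Real.exp_pos (-(2 * ν * R))) using 1
  ext i j
  simp only [Matrix.of_apply, Matrix.smul_apply, smul_eq_mul, ← Real.exp_add]
  rw [spearmanRankCorr_eq_sub, hGapp, ← hR]
  congr 1
  ring
end

section
/- Let S_ℕ be the group of all permutations of ℕ and let d be any one of the Kendall tau, Hamming, Spearman footrule or Spearman rank correlation distances, extended to S_ℕ as a sum of nonnegative terms with values in [0,∞]. For every ν > 0, the map K(π,σ) defined as exp(−ν·d(π,σ)) when d(π,σ) < ∞ and as 0 when d(π,σ) = ∞ is a strictly positive definite kernel on S_ℕ: for every N and every pairwise distinct π_1,…,π_N ∈ S_ℕ, the N×N matrix (K(π_i,π_j))_{1≤i,j≤N} is positive definite. -/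
/-!
Each of the four distances is a sum `∑ₖ δₖ(π, σ)` of `ℕ`-valued costs, where `δₖ` compares one
feature `fₖ` of the permutations and all the features together determine the permutation. Hence
the kernel is the (possibly infinite) entrywise product of the kernels `exp (-ν δₖ)`.

The quantitative input is that, on any finite family of points, `exp (-ν δₖ)` dominates, in the
Loewner order, a positive multiple of the indicator kernel `[fₖ π = fₖ σ]`. By the Schur product
theorem this domination is stable under entrywise products. Given distinct `π₁, …, π_N`, finitely
many features already separate them, and the product of the corresponding indicator kernels is the
identity matrix; so the product of these finitely many factors dominates `c • 1` with `c > 0`.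
Multiplying by further factors, which are positive semidefinite with unit diagonal, preserves the
bound `c • 1`, and so does passing to the limit (`strictPosDefKernel_of_features`). When the
distance is infinite the finite products tend to `0`, which is the value of the kernel.

For the Hamming distance (features `π i`), Kendall's tau (features `[π i < π j]`) and the footrule
(features `[m < π i]`, using `|a - b| = #{m : [m < a] ≠ [m < b]}`) the costs are `0` or `1` and
`exp (-ν δₖ) = (1 - e^{-ν}) [fₖ π = fₖ σ] + e^{-ν}`. For the rank correlation distance the factors
are Gaussian kernels on `ℕ`, whose strict positivity follows from the expansion
`exp (2νab) = ∑ₙ (2ν)ⁿ aⁿ bⁿ / n!` and the Vandermonde determinant.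
-/

open scoped ENNReal

/-- Kendall's tau distance on permutations of `ℕ`, with values in `[0,∞]`. -/
noncomputable def dKenE (π σ : Equiv.Perm ℕ) : ℝ≥0∞ :=
  ∑' p : ℕ × ℕ,
    if p.1 < p.2 ∧ ((σ p.2 < σ p.1 ∧ π p.1 < π p.2) ∨ (σ p.1 < σ p.2 ∧ π p.2 < π p.1))
    then 1 else 0

/-- Hamming distance on permutations of `ℕ`, with values in `[0,∞]`. -/
noncomputable def dHamE (π σ : Equiv.Perm ℕ) : ℝ≥0∞ :=
  ∑' i : ℕ, if π i ≠ σ i then 1 else 0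

/-- Spearman's footrule distance on permutations of `ℕ`, with values in `[0,∞]`. -/
noncomputable def dFootE (π σ : Equiv.Perm ℕ) : ℝ≥0∞ :=
  ∑' i : ℕ, (((π i : ℤ) - (σ i : ℤ)).natAbs : ℝ≥0∞)

/-- Spearman's rank correlation distance on permutations of `ℕ`, with values in `[0,∞]`. -/
noncomputable def dS2E (π σ : Equiv.Perm ℕ) : ℝ≥0∞ :=
  ∑' i : ℕ, ((((π i : ℤ) - (σ i : ℤ)).natAbs : ℝ≥0∞)) ^ 2

/-- The kernel `exp(-ν d(π,σ))` when `d(π,σ) < ∞`, and `0` when `d(π,σ) = ∞`. -/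
noncomputable def kerE (ν : ℝ) (d : Equiv.Perm ℕ → Equiv.Perm ℕ → ℝ≥0∞)
    (π σ : Equiv.Perm ℕ) : ℝ :=
  if d π σ ≠ ⊤ then Real.exp (-ν * (d π σ).toReal) else 0

open Filter Topology
open scoped Matrix

/-! ### Matrices bounded below by indicator kernels -/

open Classical in
/-- The matrix of the kernel `c · [g i = g j]`. -/
noncomputable def eqMat {n β : Type*} (c : ℝ) (g : n → β) : Matrix n n ℝ :=
  Matrix.of fun i j => if g i = g j then c else 0

lemma eqMat_posSemidef {n β : Type*} {c : ℝ} (hc : 0 ≤ c) (g : n → β) :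
    (eqMat c g).PosSemidef := by
  classical
  have h : (c • (1 : Matrix β β ℝ)).PosSemidef := Matrix.PosSemidef.one.smul hc
  have h2 := h.submatrix g
  convert h2 using 1
  ext i j
  simp [eqMat, Matrix.one_apply]

/-- The Schur product theorem, stated for the standard order and star structure on `ℝ`. -/
lemma schur_real {n : Type*} [Fintype n] {A B : Matrix n n ℝ} (hA : A.PosSemidef)
    (hB : B.PosSemidef) : (A ⊙ B).PosSemidef :=
  Matrix.PosSemidef.hadamard hA hB

/-- Monotonicity of the entrywise product in the Loewner order on positive semidefinite
matrices. -/
lemma hadamard_sub_posSemidef {n : Type*} [Fintype n] {A B C D : Matrix n n ℝ}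
    (hC : C.PosSemidef) (hD : D.PosSemidef) (hAC : (A - C).PosSemidef)
    (hBD : (B - D).PosSemidef) : (A ⊙ B - C ⊙ D).PosSemidef := by
  have hA : A.PosSemidef := by simpa using hAC.add hC
  have h := (schur_real hA hBD).add (schur_real hAC hD)
  convert h using 1
  ext i j
  simp only [Matrix.sub_apply, Matrix.add_apply, Matrix.hadamard_apply]
  ring

lemma ones_posSemidef {n : Type*} : (Matrix.of fun _ _ : n => (1 : ℝ)).PosSemidef := by
  convert eqMat_posSemidef zero_le_one (fun _ : n => ()) using 1
  ext i j
  simp [eqMat]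

lemma prod_posSemidef {n ι : Type*} [Fintype n] (M : ι → Matrix n n ℝ) (F : Finset ι)
    (h : ∀ k, (M k).PosSemidef) : (Matrix.of fun i j => ∏ k ∈ F, M k i j).PosSemidef := by
  classical
  induction F using Finset.induction_on with
  | empty => simpa using ones_posSemidef
  | insert a s ha ih =>
    convert schur_real (h a) ih using 1
    ext i j
    simp [Finset.prod_insert ha]

lemma prod_sub_eqMat_posSemidef {n ι β : Type*} [Fintype n] (M : ι → Matrix n n ℝ) (c : ι → ℝ)
    (g : ι → n → β) (F : Finset ι) (hc : ∀ k, 0 < c k)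
    (h : ∀ k, (M k - eqMat (c k) (g k)).PosSemidef) :
    (Matrix.of (fun i j => ∏ k ∈ F, M k i j) -
      eqMat (∏ k ∈ F, c k) (fun i (k : F) => g k i)).PosSemidef := by
  classical
  induction F using Finset.induction_on with
  | empty =>
    convert Matrix.PosSemidef.zero (R := ℝ) (n := n) using 1
    ext i j
    simp [eqMat, funext_iff]
  | insert a s ha ih =>
    convert hadamard_sub_posSemidef (eqMat_posSemidef (hc a).le (g a))
      (eqMat_posSemidef (Finset.prod_nonneg fun k _ => (hc k).le) _) (h a) ih using 1
    ext i j
    simp only [Matrix.sub_apply, Matrix.hadamard_apply, Matrix.of_apply, eqMat,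
      Finset.prod_insert ha, funext_iff, Subtype.forall, Finset.forall_mem_insert]
    split_ifs <;> simp_all

/-! ### Infinite products of kernels -/

/-- The finite partial products converge to the kernel, also where the distance is infinite. -/
lemma tendsto_prod_kerE {ι : Type*} {ν : ℝ} (hν : 0 < ν)
    {d : Equiv.Perm ℕ → Equiv.Perm ℕ → ℝ≥0∞} (δ : ι → Equiv.Perm ℕ → Equiv.Perm ℕ → ℕ)
    (hd : ∀ π σ, d π σ = ∑' k, (δ k π σ : ℝ≥0∞)) (π σ : Equiv.Perm ℕ) :
    Tendsto (fun F : Finset ι => ∏ k ∈ F, Real.exp (-ν * δ k π σ)) atTop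
      (𝓝 (kerE ν d π σ)) := by
  have hs : Tendsto (fun F : Finset ι => ∑ k ∈ F, (δ k π σ : ℝ≥0∞)) atTop (𝓝 (d π σ)) := by
    rw [hd]
    exact ENNReal.summable.hasSum
  have hr : ∀ F : Finset ι, ∏ k ∈ F, Real.exp (-ν * δ k π σ) =
      Real.exp (-ν * (∑ k ∈ F, (δ k π σ : ℝ≥0∞)).toReal) := by
    intro F
    rw [← Real.exp_sum, ← Finset.mul_sum, ENNReal.toReal_sum (by simp)]
    simp
  simp_rw [hr]
  unfold kerE
  split_ifs with h
  · exact (Real.continuous_exp.tendsto _).comp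
      (((ENNReal.tendsto_toReal h).comp hs).const_mul _)
  · rw [not_not] at h
    rw [h, ENNReal.tendsto_nhds_top_iff_nnreal] at hs
    refine Real.tendsto_exp_atBot.comp ?_
    refine Tendsto.const_mul_atTop_of_neg (neg_lt_zero.mpr hν) ?_
    rw [tendsto_atTop]
    intro b
    filter_upwards [hs b.toNNReal] with F hF
    have hfin : ∑ k ∈ F, (δ k π σ : ℝ≥0∞) ≠ ⊤ := by simp [ENNReal.sum_eq_top]
    have := (ENNReal.toReal_lt_toReal ENNReal.coe_ne_top hfin).2 hF
    exact (Real.le_coe_toNNReal b).trans this.le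

lemma posSemidef_of_tendsto {n α : Type*} [Fintype n] {l : Filter α} [l.NeBot]
    {A : α → Matrix n n ℝ} {B : Matrix n n ℝ} (hA : ∀ᶠ a in l, (A a).PosSemidef)
    (h : ∀ i j, Tendsto (fun a => A a i j) l (𝓝 (B i j))) : B.PosSemidef := by
  refine Matrix.PosSemidef.of_dotProduct_mulVec_nonneg ?_ fun x => ?_
  · ext i j
    refine tendsto_nhds_unique_of_eventuallyEq (h j i) (h i j) ?_
    filter_upwards [hA] with a ha
    simpa using ha.isHermitian.apply i j
  · have ht : Tendsto (fun a => star x ⬝ᵥ (A a *ᵥ x)) l (𝓝 (star x ⬝ᵥ (B *ᵥ x))) := by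
      simp only [dotProduct, Matrix.mulVec]
      exact tendsto_finsetSum _ fun i _ =>
        (tendsto_finsetSum _ fun j _ => (h i j).mul_const _).const_mul _
    refine ge_of_tendsto ht ?_
    filter_upwards [hA] with a ha using ha.dotProduct_mulVec_nonneg x

/-- If a distance is a sum of costs `δ k` such that, on finite families, `exp (-ν δ k)` dominates
a positive multiple of the indicator kernel of a feature `f k`, and the features jointly separate
permutations, then the associated kernel is strictly positive definite. -/
lemma strictPosDefKernel_of_features {ι β : Type*} {ν : ℝ} (hν : 0 < ν)
    {d : Equiv.Perm ℕ → Equiv.Perm ℕ → ℝ≥0∞} (δ : ι → Equiv.Perm ℕ → Equiv.Perm ℕ → ℕ)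
    (f : ι → Equiv.Perm ℕ → β)
    (hd : ∀ π σ, d π σ = ∑' k, (δ k π σ : ℝ≥0∞))
    (hself : ∀ k π, δ k π π = 0)
    (hf : ∀ π σ, (∀ k, f k π = f k σ) → π = σ)
    (hker : ∀ k (N : ℕ) (x : Fin N → Equiv.Perm ℕ), ∃ c : ℝ, 0 < c ∧
      (Matrix.of (fun i j => Real.exp (-ν * δ k (x i) (x j))) -
        eqMat c (fun i => f k (x i))).PosSemidef) :
    StrictPosDefKernel (kerE ν d) := by
  classical
  intro N x hx
  choose c hc hM using fun k => hker k N x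
  set M : ι → Matrix (Fin N) (Fin N) ℝ :=
    fun k => Matrix.of (fun i j => Real.exp (-ν * δ k (x i) (x j))) with hMdef
  have hMpsd : ∀ k, (M k).PosSemidef := fun k => by
    have h := (hM k).add (eqMat_posSemidef (hc k).le fun i => f k (x i))
    rwa [sub_add_cancel] at h
  -- finitely many features separate the points `x i`
  obtain ⟨F₀, hF₀⟩ : ∃ F₀ : Finset ι, ∀ i j, (∀ k ∈ F₀, f k (x i) = f k (x j)) → i = j := by
    have : ∀ p : Fin N × Fin N, ∃ s : Finset ι,
        (∀ k ∈ s, f k (x p.1) = f k (x p.2)) → p.1 = p.2 := by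
      intro p
      by_cases hp : ∀ k, f k (x p.1) = f k (x p.2)
      · exact ⟨∅, fun _ => hx (hf _ _ hp)⟩
      · push Not at hp
        obtain ⟨k, hk⟩ := hp
        exact ⟨{k}, fun h => absurd (h k (by simp)) hk⟩
    choose s hs using this
    refine ⟨Finset.univ.biUnion s, fun i j h => hs (i, j) fun k hk => h k ?_⟩
    exact Finset.mem_biUnion.2 ⟨(i, j), Finset.mem_univ _, hk⟩
  set C := ∏ k ∈ F₀, c k with hC
  have hCpos : 0 < C := Finset.prod_pos fun k _ => hc k
  have hbound : ∀ F, F₀ ⊆ F →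
      (Matrix.of (fun i j => ∏ k ∈ F, M k i j) - C • (1 : Matrix _ _ ℝ)).PosSemidef := by
    intro F hF
    have h1 := prod_sub_eqMat_posSemidef M c (fun k i => f k (x i)) F₀ hc hM
    have h2 := prod_posSemidef M (F \ F₀) hMpsd
    convert schur_real h1 h2 using 1
    ext i j
    simp only [Matrix.sub_apply, Matrix.hadamard_apply, Matrix.of_apply, Matrix.smul_apply,
      Matrix.one_apply, eqMat, sub_mul, ← Finset.prod_sdiff hF, ← hC]
    rw [mul_comm (∏ k ∈ F \ F₀, M k i j)]
    congr 1
    by_cases hij : i = j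
    · subst hij
      simp [hMdef, hself]
    · have : ¬ ((fun k : F₀ => f k (x i)) = fun k : F₀ => f k (x j)) := fun h =>
        hij (hF₀ i j fun k hk => congrFun h ⟨k, hk⟩)
      simp [hij, this]
  have hlim : ((Matrix.of fun i j : Fin N => kerE ν d (x i) (x j)) -
      C • (1 : Matrix _ _ ℝ)).PosSemidef := by
    refine posSemidef_of_tendsto (l := atTop)
      (A := fun F : Finset ι => Matrix.of (fun i j => ∏ k ∈ F, M k i j) - C • 1)
      ((eventually_ge_atTop F₀).mono hbound) fun i j => ?_
    exact (tendsto_prod_kerE hν δ hd (x i) (x j)).sub_const _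
  simpa using (Matrix.PosDef.one.smul hCpos).posSemidef_add hlim

/-! ### Zero-one costs: Hamming, Kendall and footrule -/

/-- A cost which is the indicator of `f k π ≠ f k σ` satisfies the hypotheses of
`strictPosDefKernel_of_features`, since `exp (-ν [a ≠ b]) - (1 - e^{-ν}) [a = b]` is the constant
`e^{-ν}`. -/
lemma strictPosDefKernel_of_indicators {ι β : Type*} [DecidableEq β] {ν : ℝ} (hν : 0 < ν)
    {d : Equiv.Perm ℕ → Equiv.Perm ℕ → ℝ≥0∞} (f : ι → Equiv.Perm ℕ → β)
    (hd : ∀ π σ, d π σ = ∑' k, if f k π ≠ f k σ then 1 else 0)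
    (hf : ∀ π σ, (∀ k, f k π = f k σ) → π = σ) :
    StrictPosDefKernel (kerE ν d) := by
  refine strictPosDefKernel_of_features hν (fun k π σ => if f k π ≠ f k σ then 1 else 0) f
    (fun π σ => by simpa using hd π σ) (by simp) hf fun k N x => ?_
  refine ⟨1 - Real.exp (-ν), by simpa using hν, ?_⟩
  convert (ones_posSemidef (n := Fin N)).smul (Real.exp_pos (-ν)).le using 1
  ext i j
  by_cases h : f k (x i) = f k (x j) <;> simp [eqMat, h]

lemma strictPosDef_ham {ν : ℝ} (hν : 0 < ν) : StrictPosDefKernel (kerE ν dHamE) :=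
  strictPosDefKernel_of_indicators hν (fun i π => π i) (fun _ _ => rfl)
    fun _ _ h => Equiv.ext h

lemma strictPosDef_ken {ν : ℝ} (hν : 0 < ν) : StrictPosDefKernel (kerE ν dKenE) := by
  refine strictPosDefKernel_of_indicators hν
    (fun (p : ℕ × ℕ) π => decide (p.1 < p.2 ∧ π p.1 < π p.2)) (fun π σ => ?_) fun π σ h => ?_
  · refine tsum_congr fun p => ?_
    refine if_congr ?_ rfl rfl
    by_cases hp : p.1 < p.2
    · have h1 : π p.1 ≠ π p.2 := fun h => hp.ne (π.injective h)
      have h2 : σ p.1 ≠ σ p.2 := fun h => hp.ne (σ.injective h)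
      simp only [hp, true_and, ne_eq, decide_eq_decide]
      omega
    · simp [hp]
  · have h1 : ∀ a b, a < b → (π a < π b ↔ σ a < σ b) := by
      intro a b hab
      simpa [hab] using h (a, b)
    have h2 : ∀ a b, π a < π b ↔ σ a < σ b := by
      intro a b
      rcases lt_trichotomy a b with hab | rfl | hab
      · exact h1 a b hab
      · simp
      · have h3 := h1 b a hab
        have h4 : π a ≠ π b := fun h => hab.ne' (π.injective h)
        have h5 : σ a ≠ σ b := fun h => hab.ne' (σ.injective h)
        omega
    -- `σ ∘ π⁻¹` is an order automorphism of `ℕ`, hence the identity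
    let e : ℕ ≃o ℕ := ⟨π.symm.trans σ, by
      intro a b
      have := h2 (π.symm b) (π.symm a)
      simp only [Equiv.apply_symm_apply] at this
      simp only [Equiv.trans_apply]
      omega⟩
    ext a
    have h6 : e (π a) = σ a := by simp [e]
    rw [Subsingleton.elim e (OrderIso.refl ℕ)] at h6
    simpa using h6

lemma strictPosDef_foot {ν : ℝ} (hν : 0 < ν) : StrictPosDefKernel (kerE ν dFootE) := by
  refine strictPosDefKernel_of_indicators hν
    (fun (p : ℕ × ℕ) π => decide (p.2 < π p.1)) (fun π σ => ?_) fun π σ h => ?_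
  · rw [ENNReal.tsum_prod (f := fun i m =>
      if decide (m < π i) ≠ decide (m < σ i) then (1 : ℝ≥0∞) else 0)]
    refine tsum_congr fun i => ?_
    -- the thresholds separating `π i` from `σ i` form the interval between them
    rw [tsum_eq_sum (s := Finset.Ico (min (π i) (σ i)) (max (π i) (σ i)))]
    · rw [Finset.sum_congr rfl (g := fun _ => 1)]
      · simp only [Finset.sum_const, Nat.card_Ico, nsmul_eq_mul, mul_one]
        congr 1
        omega
      · intro m hm
        rw [Finset.mem_Ico] at hm
        rw [if_pos]
        simp only [ne_eq, decide_eq_decide]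
        omega
    · intro m hm
      rw [Finset.mem_Ico] at hm
      rw [if_neg]
      simp only [ne_eq, decide_eq_decide]
      omega
  · ext i
    have h1 := h (i, π i)
    have h2 := h (i, σ i)
    simp only [decide_eq_decide] at h1 h2
    omega

/-! ### Gaussian factors: the rank correlation distance -/

lemma posDef_exp_mul {ν : ℝ} (hν : 0 < ν) (m : ℕ) :
    (Matrix.of fun a b : Fin m => Real.exp (2 * ν * ((a : ℕ) : ℝ) * ((b : ℕ) : ℝ))).PosDef := by
  refine Matrix.PosDef.of_dotProduct_mulVec_pos ?_ fun v hv => ?_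
  · ext a b
    simp [mul_right_comm]
  · have hs : HasSum (fun n : ℕ => (2 * ν) ^ n / n.factorial *
        (∑ a : Fin m, v a * ((a : ℕ) : ℝ) ^ n) ^ 2)
        (star v ⬝ᵥ ((Matrix.of fun a b : Fin m =>
          Real.exp (2 * ν * ((a : ℕ) : ℝ) * ((b : ℕ) : ℝ))) *ᵥ v)) := by
      have h1 : ∀ a b : Fin m, HasSum (fun n : ℕ =>
          v a * ((2 * ν * ((a : ℕ) : ℝ) * ((b : ℕ) : ℝ)) ^ n / n.factorial * v b))
          (v a * (Real.exp (2 * ν * ((a : ℕ) : ℝ) * ((b : ℕ) : ℝ)) * v b)) := by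
        intro a b
        have := NormedSpace.expSeries_div_hasSum_exp
          (2 * ν * ((a : ℕ) : ℝ) * ((b : ℕ) : ℝ))
        rw [← Real.exp_eq_exp_ℝ] at this
        exact (this.mul_right _).mul_left _
      have h2 := hasSum_sum fun a (_ : a ∈ Finset.univ) =>
        hasSum_sum fun b (_ : b ∈ Finset.univ) => h1 a b
      convert h2 using 1
      · ext n
        rw [sq, Finset.sum_mul_sum, Finset.mul_sum]
        refine Finset.sum_congr rfl fun a _ => ?_
        rw [Finset.mul_sum]
        refine Finset.sum_congr rfl fun b _ => ?_
        rw [mul_pow, mul_pow]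
        ring
      · simp [dotProduct, Matrix.mulVec, Finset.mul_sum]
    have hn : ∀ n : ℕ, 0 ≤ (2 * ν) ^ n / n.factorial *
        (∑ a : Fin m, v a * ((a : ℕ) : ℝ) ^ n) ^ 2 := fun n => by positivity
    -- a nonzero vector has a nonzero moment of order less than `m`
    obtain ⟨n, hne⟩ : ∃ n : Fin m, (∑ a : Fin m, v a * ((a : ℕ) : ℝ) ^ (n : ℕ)) ≠ 0 := by
      by_contra! hcon
      exact hv (Matrix.eq_zero_of_forall_pow_sum_mul_pow_eq_zero
        (f := fun a : Fin m => ((a : ℕ) : ℝ))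
        (Nat.cast_injective.comp Fin.val_injective) hcon)
    have hpos : 0 < (2 * ν) ^ (n : ℕ) / (n : ℕ).factorial *
        (∑ a : Fin m, v a * ((a : ℕ) : ℝ) ^ (n : ℕ)) ^ 2 := by positivity
    exact hpos.trans_le (le_hasSum hs n fun k _ => hn k)

lemma posDef_gauss {ν : ℝ} (hν : 0 < ν) (m : ℕ) :
    (Matrix.of fun a b : Fin m =>
      Real.exp (-ν * ((((a : ℕ) : ℝ) - ((b : ℕ) : ℝ)) ^ 2))).PosDef := by
  have h := (posDef_exp_mul hν m).conjTranspose_mul_mul_same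
    (B := Matrix.diagonal fun a : Fin m => Real.exp (-ν * ((a : ℕ) : ℝ) ^ 2)) (by
      intro v w hvw
      ext a
      have := congrFun hvw a
      simpa [Matrix.mulVec_diagonal] using this)
  convert h using 1
  ext a b
  simp only [Matrix.diagonal_conjTranspose, Matrix.mul_diagonal, Matrix.diagonal_mul,
    Matrix.of_apply, star_trivial, ← Real.exp_add]
  congr 1
  ring

open scoped MatrixOrder in
lemma exists_pos_sub_posSemidef {n : Type*} [Fintype n] [DecidableEq n] {A : Matrix n n ℝ}
    (hA : A.PosDef) : ∃ c : ℝ, 0 < c ∧ (A - c • (1 : Matrix n n ℝ)).PosSemidef := by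
  rcases subsingleton_or_nontrivial (Matrix n n ℝ) with hsub | hnon
  · refine ⟨1, one_pos, ?_⟩
    rw [Subsingleton.elim (A - _) 0]
    exact Matrix.PosSemidef.zero
  obtain ⟨c, hc, h⟩ := (CFC.exists_pos_algebraMap_le_iff (a := A) hA.isHermitian).2
    fun x hx => hA.isStrictlyPositive.spectrum_pos hx
  refine ⟨c, hc, ?_⟩
  rw [Matrix.le_iff, Algebra.algebraMap_eq_smul_one] at h
  exact h

lemma strictPosDef_s2 {ν : ℝ} (hν : 0 < ν) : StrictPosDefKernel (kerE ν dS2E) := by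
  refine strictPosDefKernel_of_features hν
    (fun i π σ => (((π i : ℤ) - (σ i : ℤ)).natAbs) ^ 2) (fun i π => π i)
    (fun π σ => by simp [dS2E]) (by simp) (fun _ _ h => Equiv.ext h) fun k N x => ?_
  -- the matrix is pulled back from the Gaussian matrix on an initial segment of `ℕ`
  obtain ⟨m, hm⟩ : ∃ m, ∀ i, x i k < m :=
    ⟨Finset.univ.sup (fun i => x i k) + 1, fun i =>
      Nat.lt_succ_of_le (Finset.le_sup (f := fun i => x i k) (Finset.mem_univ i))⟩
  obtain ⟨c, hc, h⟩ := exists_pos_sub_posSemidef (posDef_gauss hν m)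
  refine ⟨c, hc, ?_⟩
  convert h.submatrix (fun i => (⟨x i k, hm i⟩ : Fin m)) using 1
  ext i j
  simp [eqMat, Matrix.one_apply]

theorem kernel_strictly_pos_def_on_SN (ν : ℝ) (hν : 0 < ν)
    (d : Equiv.Perm ℕ → Equiv.Perm ℕ → ℝ≥0∞)
    (hd : d = dKenE ∨ d = dHamE ∨ d = dFootE ∨ d = dS2E) :
    StrictPosDefKernel (kerE ν d) := by
  rcases hd with rfl | rfl | rfl | rfl
  · exact strictPosDef_ken hν
  · exact strictPosDef_ham hν
  · exact strictPosDef_foot hν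
  · exact strictPosDef_s2 hν
end

section
/- Let n ≥ 1, let d be one of the Kendall tau, Hamming or Spearman footrule distances on S_n, and let ν > 0. Then the map (R,R') ↦ exp(−ν·d_avg(R,R')) is a positive definite kernel on the set of partial rankings of {1,…,n}: for every N and every partial rankings R_1,…,R_N, the N×N matrix (exp(−ν·d_avg(R_i,R_j)))_{1≤i,j≤N} is positive semidefinite. -/
/-!
Each of the three distances has the form `d(π, σ) = c - w ∑ₖ gₖ(π) gₖ(σ)` with `w ≥ 0`, for finitely
many real features `gₖ`: the indicators of `π i = j` for the Hamming distance, the signs of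
`π j - π i` for Kendall's tau, and the `±1`-valued indicators of `π i ≤ k` for the footrule
(which uses `|a - b| = #{k : exactly one of a ≤ k, b ≤ k holds}`).

Every partial ranking has a compatible permutation (`compatSet_nonempty`), so averaging preserves this
form: `d_avg(R, R') = c - w ∑ₖ Gₖ(R) Gₖ(R')`, where `Gₖ(R)` is the mean of `gₖ` over `E_R`.
Hence `exp(-ν d_avg) = exp(-ν c) exp(ν w ⟨G, G'⟩)`, and the entrywise exponential of a positive
semidefinite matrix is positive semidefinite by the Schur product theorem (`posSemidef_map_exp`).
-/

open Finset

/-- A partial ranking of `{1,…,n}`: an ordered tuple `(X_1, …, X_m)` of pairwise disjoint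
nonempty subsets of `{1,…,n}`. -/
structure PartialRanking (n : ℕ) where
  m : ℕ
  X : Fin m → Finset (Fin n)
  nonempty : ∀ l, (X l).Nonempty
  disjoint : ∀ l l', l ≠ l' → Disjoint (X l) (X l')

/-- The set `E_R` of permutations compatible with a partial ranking `R`. -/
def compatSet {n : ℕ} (R : PartialRanking n) : Finset (Equiv.Perm (Fin n)) :=
  Finset.univ.filter fun σ =>
    ∀ l l' : Fin R.m, l < l' → ∀ a ∈ R.X l, ∀ b ∈ R.X l', σ a < σ b

/-- The average distance `d_avg(R,R')` between two partial rankings. -/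
noncomputable def davg {n : ℕ} (d : Equiv.Perm (Fin n) → Equiv.Perm (Fin n) → ℕ)
    (R R' : PartialRanking n) : ℝ :=
  (∑ σ ∈ compatSet R, ∑ σ' ∈ compatSet R', (d σ σ' : ℝ)) /
    ((compatSet R).card * (compatSet R').card)

/-- A map `K : E × E → ℝ` is a positive definite kernel if for every `N` and every
`x_1, …, x_N` the matrix `(K (x_i) (x_j))` is positive semidefinite. -/
def PosDefKernel {E : Type*} (K : E → E → ℝ) : Prop :=
  ∀ (N : ℕ) (x : Fin N → E),
    (Matrix.of fun i j : Fin N => K (x i) (x j)).PosSemidef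

/-- Sorting the elements by the index of their block gives a compatible permutation. -/
lemma compatSet_nonempty {n : ℕ} (R : PartialRanking n) : (compatSet R).Nonempty := by
  classical
  -- Elements in no block are unconstrained; they receive the junk index `0`.
  let key : Fin n → ℕ := fun a => if h : ∃ l, a ∈ R.X l then (h.choose : ℕ) else 0
  have hkey : ∀ l, ∀ a ∈ R.X l, key a = l := by
    intro l a ha
    have h : ∃ l, a ∈ R.X l := ⟨l, ha⟩
    have h2 : h.choose = l := by
      by_contra hne
      exact Finset.disjoint_left.mp (R.disjoint _ _ hne) h.choose_spec ha
    simp only [key, dif_pos h, h2]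
  refine ⟨(Tuple.sort key).symm, ?_⟩
  simp only [compatSet, Finset.mem_filter, Finset.mem_univ, true_and]
  intro l l' hll a ha b hb
  by_contra hcon
  have hm := Tuple.monotone_sort key (not_lt.mp hcon)
  simp only [Function.comp, Equiv.apply_symm_apply, hkey l a ha, hkey l' b hb] at hm
  exact absurd (Fin.lt_def.mp hll) (by omega)

lemma posSemidef_map_pow {N : ℕ} {M : Matrix (Fin N) (Fin N) ℝ} (hM : M.PosSemidef) (k : ℕ) :
    (Matrix.of fun i j => M i j ^ k).PosSemidef := by
  induction k with
  | zero =>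
    convert Matrix.posSemidef_vecMulVec_self_star (fun _ : Fin N => (1 : ℝ)) using 1
    ext i j
    simp [Matrix.vecMulVec_apply]
  | succ k ih =>
    have h : (Matrix.of fun i j => M i j ^ (k + 1)) = (Matrix.of fun i j => M i j ^ k).hadamard M := by
      ext i j
      simp [pow_succ]
    rw [h]
    exact ih.hadamard hM

/-- The quadratic form of the entrywise exponential is the sum of the exponential series of the
quadratic forms of the entrywise powers. -/
lemma posSemidef_map_exp {N : ℕ} {M : Matrix (Fin N) (Fin N) ℝ} (hM : M.PosSemidef) :
    (Matrix.of fun i j => Real.exp (M i j)).PosSemidef := by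
  refine Matrix.PosSemidef.of_dotProduct_mulVec_nonneg ?_ ?_
  · ext i j
    have h := hM.isHermitian.apply i j
    simp only [star_trivial] at h
    simp [h]
  · intro x
    have hs : HasSum (fun k : ℕ => star x ⬝ᵥ
        ((k.factorial : ℝ)⁻¹ • Matrix.of fun i j => M i j ^ k).mulVec x)
        (star x ⬝ᵥ (Matrix.of fun i j => Real.exp (M i j)).mulVec x) := by
      simp only [dotProduct, Matrix.mulVec, Matrix.smul_apply, Matrix.of_apply]
      refine hasSum_sum fun i _ => HasSum.mul_left _ (hasSum_sum fun j _ => HasSum.mul_right _ ?_)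
      rw [Real.exp_eq_exp_ℝ]
      exact NormedSpace.exp_series_hasSum_exp' (𝕂 := ℝ) (M i j)
    refine hs.nonneg fun k => ?_
    exact ((posSemidef_map_pow hM k).smul (by positivity)).dotProduct_mulVec_nonneg x

/-- If `d` is a constant minus a nonnegative multiple of an inner product of feature vectors, then
so is its average, with averaged features, and the kernel is positive definite. -/
lemma posDefKernel_of_features {n : ℕ} {κ : Type*} [Fintype κ] {ν : ℝ} (hν : 0 < ν)
    (d : Equiv.Perm (Fin n) → Equiv.Perm (Fin n) → ℕ) (c w : ℝ) (hw : 0 ≤ w)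
    (g : κ → Equiv.Perm (Fin n) → ℝ)
    (hd : ∀ π σ, (d π σ : ℝ) = c - w * ∑ k, g k π * g k σ) :
    PosDefKernel (fun R R' : PartialRanking n => Real.exp (-ν * davg d R R')) := by
  intro N x
  let G : κ → PartialRanking n → ℝ := fun k R =>
    (∑ σ ∈ compatSet R, g k σ) / (compatSet R).card
  have havg : ∀ R R', davg d R R' = c - w * ∑ k, G k R * G k R' := by
    intro R R'
    have h1 : ((compatSet R).card : ℝ) ≠ 0 :=
      Nat.cast_ne_zero.mpr (compatSet_nonempty R).card_ne_zero
    have h2 : ((compatSet R').card : ℝ) ≠ 0 :=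
      Nat.cast_ne_zero.mpr (compatSet_nonempty R').card_ne_zero
    have hsum : ∑ σ ∈ compatSet R, ∑ σ' ∈ compatSet R', ∑ k, g k σ * g k σ'
        = ∑ k, (∑ σ ∈ compatSet R, g k σ) * ∑ σ' ∈ compatSet R', g k σ' := by
      simp only [Finset.sum_mul_sum]
      rw [Finset.sum_comm' (s := Finset.univ) (t' := compatSet R) (s' := fun _ => Finset.univ)
        (by simp)]
      exact Finset.sum_congr rfl fun σ _ => Finset.sum_comm
    simp only [davg, hd, Finset.sum_sub_distrib, ← Finset.mul_sum, hsum, Finset.sum_const,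
      nsmul_eq_mul, G, div_mul_div_comm, ← Finset.sum_div]
    field_simp
  let A : Matrix κ (Fin N) ℝ := Matrix.of fun k i => G k (x i)
  have hA : ((ν * w) • (A.conjTranspose * A)).PosSemidef :=
    (Matrix.posSemidef_conjTranspose_mul_self A).smul (by positivity)
  have hE := (posSemidef_map_exp hA).smul (Real.exp_pos (-ν * c)).le
  convert hE using 1
  ext i j
  simp only [Matrix.of_apply, Matrix.smul_apply, smul_eq_mul, ← Real.exp_add, havg,
    Matrix.mul_apply, Matrix.conjTranspose_apply, star_trivial, A]
  congr 1
  ring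

lemma hamming_features {n : ℕ} (π σ : Equiv.Perm (Fin n)) :
    (permHammingDist π σ : ℝ) = n - 1 * ∑ p : Fin n × Fin n,
      (if π p.1 = p.2 then (1 : ℝ) else 0) * (if σ p.1 = p.2 then (1 : ℝ) else 0) := by
  have h : ∀ i, ∑ j, (if π i = j then (1 : ℝ) else 0) * (if σ i = j then (1 : ℝ) else 0)
      = 1 - if π i ≠ σ i then 1 else 0 := by
    intro i
    simp [eq_comm]
    by_cases h : π i = σ i <;> simp [h]
  rw [Fintype.sum_prod_type, permHammingDist, Finset.card_filter]
  simp only [h, Finset.sum_sub_distrib]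
  simp

lemma kendall_features {n : ℕ} (π σ : Equiv.Perm (Fin n)) :
    (kendallTau π σ : ℝ) = (∑ p : Fin n × Fin n, if p.1 < p.2 then (1 / 2 : ℝ) else 0) -
      (1 / 2) * ∑ p : Fin n × Fin n,
        (if p.1 < p.2 then (if π p.1 < π p.2 then (1 : ℝ) else -1) else 0) *
        (if p.1 < p.2 then (if σ p.1 < σ p.2 then (1 : ℝ) else -1) else 0) := by
  rw [kendallTau, Finset.card_filter, Finset.mul_sum, ← Finset.sum_sub_distrib]
  push_cast
  refine Finset.sum_congr rfl fun p _ => ?_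
  by_cases hp : p.1 < p.2
  · have h1 : π p.2 < π p.1 ↔ ¬ π p.1 < π p.2 := by
      have := π.injective.ne hp.ne
      constructor <;> intro h <;> order
    have h2 : σ p.2 < σ p.1 ↔ ¬ σ p.1 < σ p.2 := by
      have := σ.injective.ne hp.ne
      constructor <;> intro h <;> order
    simp only [h1, h2]
    by_cases ha : π p.1 < π p.2 <;> by_cases hb : σ p.1 < σ p.2 <;> simp [hp, ha, hb] <;> norm_num
  · simp [hp]

/-- `|a - b|` counts the thresholds `k` that separate `a` from `b`. -/
lemma natAbs_sub_eq_sum {n : ℕ} (a b : Fin n) :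
    ((((a : ℤ) - (b : ℤ)).natAbs : ℕ) : ℝ) =
      ∑ k : Fin n, (1 / 2 - 1 / 2 * ((if a ≤ k then (1 : ℝ) else -1) *
        (if b ≤ k then (1 : ℝ) else -1))) := by
  have h : ((a : ℤ) - (b : ℤ)).natAbs = (Finset.Ico (min a b) (max a b)).card := by
    rw [Fin.card_Ico]
    rcases le_total a b with hab | hab
    · rw [min_eq_left hab, max_eq_right hab]
      have := Fin.le_def.mp hab
      omega
    · rw [min_eq_right hab, max_eq_left hab]
      have := Fin.le_def.mp hab
      omega
  have h' : Finset.Ico (min a b) (max a b)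
      = Finset.univ.filter fun k => ¬ (a ≤ k ↔ b ≤ k) := by
    ext k
    simp only [Finset.mem_Ico, Finset.mem_filter, Finset.mem_univ, true_and, min_le_iff,
      lt_max_iff]
    grind
  rw [h, h', Finset.card_filter]
  push_cast
  refine Finset.sum_congr rfl fun k _ => ?_
  by_cases ha : a ≤ k <;> by_cases hb : b ≤ k <;> simp [ha, hb] <;> norm_num

lemma footrule_features {n : ℕ} (π σ : Equiv.Perm (Fin n)) :
    (spearmanFootrule π σ : ℝ) = (∑ _p : Fin n × Fin n, (1 / 2 : ℝ)) -
      (1 / 2) * ∑ p : Fin n × Fin n,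
        (if π p.1 ≤ p.2 then (1 : ℝ) else -1) * (if σ p.1 ≤ p.2 then (1 : ℝ) else -1) := by
  rw [Finset.mul_sum, ← Finset.sum_sub_distrib, Fintype.sum_prod_type, spearmanFootrule,
    Nat.cast_sum]
  exact Finset.sum_congr rfl fun i _ => natAbs_sub_eq_sum (π i) (σ i)

theorem avg_kernel_pos_def_on_partial_rankings (n : ℕ) (hn : 1 ≤ n) (ν : ℝ) (hν : 0 < ν)
    (d : Equiv.Perm (Fin n) → Equiv.Perm (Fin n) → ℕ)
    (hd : d = kendallTau ∨ d = permHammingDist ∨ d = spearmanFootrule) :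
    PosDefKernel (fun R R' : PartialRanking n => Real.exp (-ν * davg d R R')) := by
  rcases hd with rfl | rfl | rfl
  · exact posDefKernel_of_features hν _ _ _ (by norm_num)
      (fun (p : Fin n × Fin n) π => if p.1 < p.2 then (if π p.1 < π p.2 then (1 : ℝ) else -1) else 0)
      kendall_features
  · exact posDefKernel_of_features hν _ _ _ (by norm_num)
      (fun (p : Fin n × Fin n) π => if π p.1 = p.2 then (1 : ℝ) else 0) hamming_features
  · exact posDefKernel_of_features hν _ _ _ (by norm_num)
      (fun (p : Fin n × Fin n) π => if π p.1 ≤ p.2 then (1 : ℝ) else -1) footrule_features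
end

section
/- Let I and I' be two top-k partial rankings of {1,…,n}. With the notation p, j_l, c_{j_l}, c'_{j_l}, r, u_j, u'_j, m, then the average Kendall tau distance satisfies d_{τ,avg}(I,I') = Σ_{1≤l<l'≤p} 1[(c_{j_l}<c_{j_{l'}} and c'_{j_l}>c'_{j_{l'}}) or (c_{j_l}>c_{j_{l'}} and c'_{j_l}<c'_{j_{l'}})] + r(2k+1−r) − Σ_{j=1}^r (u_j + u'_j) + r² + C(n−k,2) − (1/2)·C(m,2), where C(a,2) = a(a−1)/2 denotes the binomial coefficient. -/
/-!
For a pair `σ, σ'`, Kendall's tau counts the *ordered* pairs `(x, y)` with `σ x < σ y` and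
`σ' y < σ' x`. Averaging over `E_I × E_{I'}` factorises each term, so the average distance is
`∑ x, ∑ y, P(x, y) Q(y, x)`, where `P(x, y)` and `Q(x, y)` are the proportions of `σ` in `E_I`, resp.
`E_{I'}`, with `σ x < σ y`
(`davgSets_kendallTau`). These proportions are explicit (`sum_topCompat_lt`): `P(x, y)` is `0` or `1` as soon
as one of `x, y` is ranked by `I`, and it is `1/2` for distinct unranked items, because
exchanging the two items is an involution of `E_I`.

Let `J` be the set of common items, `B` and `C` those ranked only by `I`, resp. only by `I'`, and
`D` those ranked by neither. The double sum splits into sixteen blocks. `J × J` gives the inversion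
count, `B × C` gives `r²`, `B × D` and `D × C` give `rm/2` each, and `D × D` gives `C(m,2)/2`.
The blocks `B × J` and `B × B` together give `∑_{b ∈ B} (k - u_b) - C(r,2)/2` (`sum_tilde`), since
an item at position `u` of `I` precedes exactly `k - u` ranked items; `J × C` and `C × C` are
symmetric. The remaining blocks vanish, and `n - k = m + r` turns the total into the stated formula.
-/

open Finset

/-- The set `E_I` of permutations compatible with the top-`k` partial ranking
`I = (i_1, …, i_k)`: those `σ` with `σ(i_l) = l` for `l = 1, …, k`. -/
def topCompat {n k : ℕ} (hk : k ≤ n) (I : Fin k → Fin n) : Finset (Equiv.Perm (Fin n)) :=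
  Finset.univ.filter fun σ => ∀ l : Fin k, σ (I l) = Fin.castLE hk l

/-- Average distance between two finite sets of permutations. -/
noncomputable def davgSets {n : ℕ} (d : Equiv.Perm (Fin n) → Equiv.Perm (Fin n) → ℕ)
    (A B : Finset (Equiv.Perm (Fin n))) : ℝ :=
  (∑ σ ∈ A, ∑ σ' ∈ B, (d σ σ' : ℝ)) / (A.card * B.card)

/-- The 1-based position of `x` in the tuple `I` (and `0` if `x` does not occur in `I`). -/
def pos1 {n k : ℕ} (I : Fin k → Fin n) (x : Fin n) : ℕ :=
  ∑ l : Fin k, if I l = x then l.1 + 1 else 0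

/-- The set `{j_1, …, j_p}` of items ranked by both top-`k` partial rankings. -/
def interJ {n k : ℕ} (I I' : Fin k → Fin n) : Finset (Fin n) :=
  (Finset.univ.image I) ∩ (Finset.univ.image I')

/-- The set `Ĩ` of items ranked by `I` but not by `I'`. -/
def tildeSet {n k : ℕ} (I I' : Fin k → Fin n) : Finset (Fin n) :=
  (Finset.univ.image I) \ interJ I I'

/-- The items ranked by `I`. -/
def ranked {n k : ℕ} (I : Fin k → Fin n) : Finset (Fin n) := Finset.univ.image I

/-- The closed form of the proportion of permutations compatible with `I` that place `x`
before `y`. -/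
noncomputable def precProb {n k : ℕ} (I : Fin k → Fin n) (x y : Fin n) : ℝ :=
  if x ∈ ranked I then
    if y ∈ ranked I then (if pos1 I x < pos1 I y then 1 else 0) else 1
  else if y ∈ ranked I then 0 else if x = y then 0 else 1 / 2

lemma pos1_apply {n k : ℕ} {I : Fin k → Fin n} (hI : Function.Injective I) (l : Fin k) :
    pos1 I (I l) = l.1 + 1 := by
  simp [pos1, hI.eq_iff]

lemma pos1_injOn {n k : ℕ} {I : Fin k → Fin n} (hI : Function.Injective I) :
    Set.InjOn (pos1 I) (ranked I) := by
  intro x hx y hy h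
  simp only [ranked, coe_image, coe_univ, Set.image_univ, Set.mem_range] at hx hy
  obtain ⟨a, rfl⟩ := hx
  obtain ⟨b, rfl⟩ := hy
  rw [pos1_apply hI, pos1_apply hI] at h
  congr 1
  exact Fin.ext (by omega)

lemma card_ranked {n k : ℕ} {I : Fin k → Fin n} (hI : Function.Injective I) :
    (ranked I).card = k := by
  simp [ranked, card_image_of_injective _ hI]

lemma topCompat_nonempty {n k : ℕ} (hk : k ≤ n) {I : Fin k → Fin n}
    (hI : Function.Injective I) : (topCompat hk I).Nonempty := by
  -- `f` sends a rank `l < k` to the item ranked there; any bijective extension is the inverse of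
  -- a compatible permutation.
  let f : Fin n → Fin n := fun i => if h : i.1 < k then I ⟨i.1, h⟩ else i
  have hf : Set.InjOn f ((univ.filter fun i : Fin n => i.1 < k : Finset (Fin n)) : Set (Fin n)) := by
    intro a ha b hb h
    simp only [coe_filter, mem_univ, true_and, Set.mem_ofPred_eq] at ha hb
    simp only [f, ha, hb, dif_pos] at h
    have := hI h
    simp only [Fin.mk.injEq] at this
    exact Fin.ext this
  obtain ⟨g, hg⟩ := Finset.exists_equiv_extend_of_card_eq (t := (univ : Finset (Fin n)))
    (by simp) (by simp) hf
  let e : Equiv.Perm (Fin n) := g.trans (Equiv.subtypeUnivEquiv (by simp))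
  refine ⟨e.symm, ?_⟩
  simp only [topCompat, mem_filter, mem_univ, true_and]
  intro l
  rw [Equiv.symm_apply_eq]
  have := hg (Fin.castLE hk l) (by simp)
  simp [e, Equiv.subtypeUnivEquiv, this, f]

lemma topCompat_val {n k : ℕ} {hk : k ≤ n} {I : Fin k → Fin n} (hI : Function.Injective I)
    {σ : Equiv.Perm (Fin n)} (hσ : σ ∈ topCompat hk I) {x : Fin n} (hx : x ∈ ranked I) :
    (σ x).1 + 1 = pos1 I x ∧ (σ x).1 < k := by
  simp only [topCompat, mem_filter, mem_univ, true_and] at hσ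
  simp only [ranked, mem_image, mem_univ, true_and] at hx
  obtain ⟨l, rfl⟩ := hx
  rw [hσ, pos1_apply hI]
  simp

lemma topCompat_val_ge {n k : ℕ} {hk : k ≤ n} {I : Fin k → Fin n}
    {σ : Equiv.Perm (Fin n)} (hσ : σ ∈ topCompat hk I) {x : Fin n} (hx : x ∉ ranked I) :
    k ≤ (σ x).1 := by
  simp only [topCompat, mem_filter, mem_univ, true_and] at hσ
  by_contra! h
  apply hx
  simp only [ranked, mem_image, mem_univ, true_and]
  refine ⟨⟨(σ x).1, h⟩, σ.injective ?_⟩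
  rw [hσ]
  rfl

/-- Composing with the transposition of two unranked items preserves compatibility. -/
lemma mul_swap_mem {n k : ℕ} {hk : k ≤ n} {I : Fin k → Fin n} {x y : Fin n}
    (hx : x ∉ ranked I) (hy : y ∉ ranked I) {σ : Equiv.Perm (Fin n)}
    (hσ : σ ∈ topCompat hk I) : σ * Equiv.swap x y ∈ topCompat hk I := by
  simp only [topCompat, mem_filter, mem_univ, true_and] at hσ ⊢
  simp only [ranked, mem_image, mem_univ, true_and, not_exists] at hx hy
  intro l
  rw [Equiv.Perm.mul_apply, Equiv.swap_apply_of_ne_of_ne (hx l) (hy l), hσ]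

lemma sum_topCompat_lt {n k : ℕ} (hk : k ≤ n) {I : Fin k → Fin n} (hI : Function.Injective I)
    (x y : Fin n) :
    (∑ σ ∈ topCompat hk I, if σ x < σ y then (1 : ℝ) else 0)
      = (topCompat hk I).card * precProb I x y := by
  have const : ∀ c : ℝ, (∀ σ ∈ topCompat hk I, (if σ x < σ y then (1 : ℝ) else 0) = c) →
      (∑ σ ∈ topCompat hk I, if σ x < σ y then (1 : ℝ) else 0) = (topCompat hk I).card * c := by
    intro c h
    rw [sum_congr rfl h]
    simp
  unfold precProb
  split_ifs with hx hy hp hy hxy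
  · refine const _ fun σ hσ => if_pos ?_
    have h1 := topCompat_val hI hσ hx
    have h2 := topCompat_val hI hσ hy
    rw [Fin.lt_def]; omega
  · refine const _ fun σ hσ => if_neg ?_
    have h1 := topCompat_val hI hσ hx
    have h2 := topCompat_val hI hσ hy
    rw [Fin.lt_def]; omega
  · refine const _ fun σ hσ => if_pos ?_
    have h1 := topCompat_val hI hσ hx
    have h2 := topCompat_val_ge hσ hy
    rw [Fin.lt_def]; omega
  · refine const _ fun σ hσ => if_neg ?_
    have h1 := topCompat_val_ge hσ hx
    have h2 := topCompat_val hI hσ hy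
    rw [Fin.lt_def]; omega
  · exact const _ fun σ hσ => by simp [hxy]
  · have hsw : (∑ σ ∈ topCompat hk I, if σ x < σ y then (1 : ℝ) else 0)
        = ∑ σ ∈ topCompat hk I, if σ y < σ x then (1 : ℝ) else 0 := by
      refine sum_bij' (fun σ _ => σ * Equiv.swap x y) (fun σ _ => σ * Equiv.swap x y)
        (fun σ hσ => mul_swap_mem hx hy hσ) (fun σ hσ => mul_swap_mem hx hy hσ) ?_ ?_ ?_
      · intro σ _; simp [mul_assoc]
      · intro σ _; simp [mul_assoc]
      · intro σ _; simp
    have hadd : (∑ σ ∈ topCompat hk I, if σ x < σ y then (1 : ℝ) else 0)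
        + (∑ σ ∈ topCompat hk I, if σ y < σ x then (1 : ℝ) else 0) = (topCompat hk I).card := by
      rw [← sum_add_distrib, card_eq_sum_ones, Nat.cast_sum]
      refine sum_congr rfl fun σ _ => ?_
      rcases lt_or_gt_of_ne (σ.injective.ne hxy) with h | h
      · simp [h, not_lt_of_gt h]
      · simp [h, not_lt_of_gt h]
    linarith

/-- A double sum vanishing on the diagonal, folded onto the pairs `x < y`. -/
lemma sum_fold {n : ℕ} (s : Finset (Fin n)) (g : Fin n → Fin n → ℝ) (hg : ∀ x, g x x = 0) :
    ∑ x ∈ s, ∑ y ∈ s, g x y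
      = ∑ x ∈ s, ∑ y ∈ s, if x < y then g x y + g y x else 0 := by
  have h1 : ∑ x ∈ s, ∑ y ∈ s, g x y
      = (∑ x ∈ s, ∑ y ∈ s, if x < y then g x y else 0)
        + ∑ x ∈ s, ∑ y ∈ s, if y < x then g x y else 0 := by
    simp only [← sum_add_distrib]
    refine sum_congr rfl fun x _ => sum_congr rfl fun y _ => ?_
    rcases lt_trichotomy x y with h | h | h
    · simp [h, not_lt_of_gt h]
    · simp [h, hg]
    · simp [h, not_lt_of_gt h]
  rw [h1, sum_comm (f := fun x y => if y < x then g x y else 0)]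
  simp only [← sum_add_distrib]
  refine sum_congr rfl fun x _ => sum_congr rfl fun y _ => ?_
  split_ifs <;> simp

/-- Discordant pairs `x < y` for two rank functions, counted through ordered pairs. -/
lemma card_discordant {n : ℕ} {α : Type*} [LinearOrder α] (s : Finset (Fin n))
    (f g : Fin n → α) :
    (((s ×ˢ s).filter fun q => q.1 < q.2 ∧
        ((f q.1 < f q.2 ∧ g q.2 < g q.1) ∨ (f q.2 < f q.1 ∧ g q.1 < g q.2))).card : ℝ)
      = ∑ x ∈ s, ∑ y ∈ s, (if f x < f y then (1 : ℝ) else 0) * (if g y < g x then 1 else 0) := by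
  rw [sum_fold _ _ (by simp), card_filter, Nat.cast_sum, sum_product]
  refine sum_congr rfl fun x _ => sum_congr rfl fun y _ => ?_
  by_cases h : x < y
  · rcases lt_trichotomy (f x) (f y) with h1 | h1 | h1 <;>
      rcases lt_trichotomy (g x) (g y) with h2 | h2 | h2 <;>
      simp [h, h1, h2, not_lt_of_gt]
  · simp [h]

lemma kendallTau_eq {n : ℕ} (σ σ' : Equiv.Perm (Fin n)) :
    (kendallTau σ σ' : ℝ) = ∑ x, ∑ y,
      (if σ x < σ y then (1 : ℝ) else 0) * (if σ' y < σ' x then 1 else 0) := by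
  rw [← card_discordant, kendallTau, univ_product_univ]
  congr 2
  ext q
  simp only [mem_filter, mem_univ, true_and]
  tauto

lemma davgSets_kendallTau {n k : ℕ} (hk : k ≤ n) {I I' : Fin k → Fin n}
    (hI : Function.Injective I) (hI' : Function.Injective I') :
    davgSets kendallTau (topCompat hk I) (topCompat hk I')
      = ∑ x, ∑ y, precProb I x y * precProb I' y x := by
  have h0 : ((topCompat hk I).card : ℝ) ≠ 0 := by
    exact_mod_cast (card_pos.mpr (topCompat_nonempty hk hI)).ne'
  have h0' : ((topCompat hk I').card : ℝ) ≠ 0 := by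
    exact_mod_cast (card_pos.mpr (topCompat_nonempty hk hI')).ne'
  rw [davgSets, div_eq_iff (mul_ne_zero h0 h0')]
  simp only [kendallTau_eq]
  have step : ∀ x y : Fin n, ((topCompat hk I).card * precProb I x y)
      * ((topCompat hk I').card * precProb I' y x)
      = ∑ σ ∈ topCompat hk I, ∑ σ' ∈ topCompat hk I',
        (if σ x < σ y then (1 : ℝ) else 0) * (if σ' y < σ' x then 1 else 0) := by
    intro x y
    rw [← sum_topCompat_lt hk hI, ← sum_topCompat_lt hk hI', sum_mul_sum]
  calc _ = ∑ σ ∈ topCompat hk I, ∑ x, ∑ y, ∑ σ' ∈ topCompat hk I',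
        (if σ x < σ y then (1 : ℝ) else 0) * (if σ' y < σ' x then 1 else 0) := by
        refine sum_congr rfl fun σ _ => ?_
        rw [sum_comm]
        refine sum_congr rfl fun x _ => ?_
        rw [sum_comm]
    _ = ∑ x, ∑ y, ((topCompat hk I).card * precProb I x y)
      * ((topCompat hk I').card * precProb I' y x) := by
        simp only [step]
        rw [sum_comm]
        refine sum_congr rfl fun x _ => ?_
        rw [sum_comm]
    _ = _ := by
        simp only [sum_mul]
        refine sum_congr rfl fun x _ => sum_congr rfl fun y _ => ?_
        ring

/-- An injective function strictly orders half of the off-diagonal pairs. -/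
lemma sum_lt_injOn {α : Type*} [DecidableEq α] (s : Finset α) (f : α → ℕ)
    (hf : Set.InjOn f s) :
    ∑ x ∈ s, ∑ y ∈ s, (if f x < f y then (1 : ℝ) else 0) = s.card * (s.card - 1) / 2 := by
  have h1 : ∑ x ∈ s, ∑ y ∈ s, (if f x < f y then (1 : ℝ) else 0)
      = ∑ x ∈ s, ∑ y ∈ s, (if f y < f x then (1 : ℝ) else 0) := sum_comm
  have h2 : (∑ x ∈ s, ∑ y ∈ s, (if f x < f y then (1 : ℝ) else 0))
      + (∑ x ∈ s, ∑ y ∈ s, (if f y < f x then (1 : ℝ) else 0))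
      = ∑ x ∈ s, ∑ y ∈ s, (1 - if x = y then (1 : ℝ) else 0) := by
    simp only [← sum_add_distrib]
    refine sum_congr rfl fun x hx => sum_congr rfl fun y hy => ?_
    rcases lt_trichotomy (f x) (f y) with h | h | h
    · have : x ≠ y := by rintro rfl; exact lt_irrefl _ h
      simp [h, not_lt_of_gt h, this]
    · simp [hf hx hy h]
    · have : x ≠ y := by rintro rfl; exact lt_irrefl _ h
      simp [h, not_lt_of_gt h, this]
  have h3 : ∑ x ∈ s, ∑ y ∈ s, (1 - if x = y then (1 : ℝ) else 0) = s.card * (s.card - 1) := by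
    simp only [sum_sub_distrib]
    simp
    ring
  linarith

/-- An item at position `u` of `I` precedes exactly `k - u` ranked items. -/
lemma sum_pos1_lt {n k : ℕ} {I : Fin k → Fin n} (hI : Function.Injective I) {x : Fin n}
    (hx : x ∈ ranked I) :
    ∑ y ∈ ranked I, (if pos1 I x < pos1 I y then (1 : ℝ) else 0) = k - pos1 I x := by
  simp only [ranked, mem_image, mem_univ, true_and] at hx
  obtain ⟨l, rfl⟩ := hx
  rw [ranked, sum_image hI.injOn]
  simp only [pos1_apply hI]
  have : (∑ y : Fin k, if l.1 + 1 < y.1 + 1 then (1 : ℝ) else 0) = ((Finset.Ioi l).card : ℝ) := by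
    rw [← sum_filter, sum_const, nsmul_eq_mul, mul_one]
    congr 2
    ext y
    simp
  rw [this, Fin.card_Ioi]
  have hl := l.2
  rw [Nat.cast_sub (by omega), Nat.cast_sub (by omega)]
  push_cast
  ring

/-- The contribution of the items `B` ranked by one ranking only: a pair inside `B` has weight `1/2`
because the other ranking leaves it unordered, while every item of `J` precedes those of `B` there. -/
lemma sum_tilde {n k : ℕ} {I : Fin k → Fin n} (hI : Function.Injective I)
    {J B : Finset (Fin n)} (hd : Disjoint J B) (hu : J ∪ B = ranked I) :
    ∑ x ∈ B, ∑ y ∈ J, (if pos1 I x < pos1 I y then (1 : ℝ) else 0)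
      + (1 / 2) * ∑ x ∈ B, ∑ y ∈ B, (if pos1 I x < pos1 I y then (1 : ℝ) else 0)
      = B.card * k - ∑ x ∈ B, (pos1 I x : ℝ) - B.card * (B.card - 1) / 4 := by
  have hsub : B ⊆ ranked I := hu ▸ subset_union_right
  have h1 := sum_lt_injOn B (pos1 I) ((pos1_injOn hI).mono (by exact_mod_cast hsub))
  have h2 : ∑ x ∈ B, ∑ y ∈ J, (if pos1 I x < pos1 I y then (1 : ℝ) else 0)
      + ∑ x ∈ B, ∑ y ∈ B, (if pos1 I x < pos1 I y then (1 : ℝ) else 0)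
      = B.card * k - ∑ x ∈ B, (pos1 I x : ℝ) := by
    rw [← sum_add_distrib]
    simp only [← sum_union hd, hu]
    rw [sum_congr rfl fun x hx => sum_pos1_lt hI (hsub hx)]
    simp
  linarith

/-- Proposition 3 (Kendall's tau case): explicit formula for the average Kendall's tau
distance between two top-`k` partial rankings.  The sum `Σ_{1≤l<l'≤p} 1[…]` over the
sorted common items `j_1 < … < j_p` is expressed as a count over pairs `x < y` of common
items, and `Σ_{j=1}^r u_j` (positions in `I` of the items of `Ĩ` listed in increasing
order) is expressed as the sum of the positions in `I` of the items of `Ĩ`. -/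
theorem davg_kendall_topk (n k : ℕ) (hk : k < n) (I I' : Fin k → Fin n)
    (hI : Function.Injective I) (hI' : Function.Injective I') :
    let p : ℕ := (interJ I I').card
    let r : ℕ := k - p
    let m : ℕ := n - ((Finset.univ.image I) ∪ (Finset.univ.image I')).card
    davgSets kendallTau (topCompat hk.le I) (topCompat hk.le I') =
      (((interJ I I' ×ˢ interJ I I').filter fun q =>
          q.1 < q.2 ∧
            ((pos1 I q.1 < pos1 I q.2 ∧ pos1 I' q.2 < pos1 I' q.1) ∨
             (pos1 I q.2 < pos1 I q.1 ∧ pos1 I' q.1 < pos1 I' q.2))).card : ℝ)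
      + (r : ℝ) * (2 * (k : ℝ) + 1 - (r : ℝ))
      - ((∑ x ∈ tildeSet I I', (pos1 I x : ℝ)) + (∑ x ∈ tildeSet I' I, (pos1 I' x : ℝ)))
      + (r : ℝ) ^ 2
      + ((n - k).choose 2 : ℝ)
      - (1 / 2) * (m.choose 2 : ℝ) := by
  intro p r m
  rw [davgSets_kendallTau hk.le hI hI', card_discordant]
  -- The partition `J, B, C, D` of the items.
  set J := interJ I I' with hJ
  set B := tildeSet I I' with hB
  set C := tildeSet I' I with hC
  set D : Finset (Fin n) := (ranked I ∪ ranked I')ᶜ with hD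
  have mJ : ∀ x, x ∈ J ↔ x ∈ ranked I ∧ x ∈ ranked I' := by
    intro x; simp [hJ, interJ, ranked]
  have mB : ∀ x, x ∈ B ↔ x ∈ ranked I ∧ x ∉ ranked I' := by
    intro x; simp only [hB, tildeSet, interJ, ranked, mem_sdiff, mem_inter]; tauto
  have mC : ∀ x, x ∈ C ↔ x ∉ ranked I ∧ x ∈ ranked I' := by
    intro x; simp only [hC, tildeSet, interJ, ranked, mem_sdiff, mem_inter]; tauto
  have mD : ∀ x, x ∈ D ↔ x ∉ ranked I ∧ x ∉ ranked I' := by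
    intro x; simp [hD]
  have dJB : Disjoint J B := disjoint_left.mpr fun x h h' => by
    rw [mJ] at h; rw [mB] at h'; tauto
  have dJC : Disjoint J C := disjoint_left.mpr fun x h h' => by
    rw [mJ] at h; rw [mC] at h'; tauto
  have uJB : J ∪ B = ranked I := by
    ext x; rw [mem_union, mJ, mB]; tauto
  have uJC : J ∪ C = ranked I' := by
    ext x; rw [mem_union, mJ, mC]; tauto
  have dBC : Disjoint (J ∪ B) C := disjoint_left.mpr fun x h h' => by
    rw [uJB] at h; rw [mC] at h'; tauto
  have uBC : J ∪ B ∪ C = ranked I ∪ ranked I' := by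
    ext x; rw [uJB, mem_union, mem_union, mC]; tauto
  have dD : Disjoint (J ∪ B ∪ C) D := by
    rw [uBC]; exact disjoint_compl_right
  have uD : J ∪ B ∪ C ∪ D = univ := by
    rw [uBC]; exact union_compl _
  have split : ∀ f : Fin n → ℝ, ∑ x, f x
      = ∑ x ∈ J, f x + ∑ x ∈ B, f x + ∑ x ∈ C, f x + ∑ x ∈ D, f x := by
    intro f
    rw [← uD, sum_union dD, sum_union dBC, sum_union dJB]
  -- Cardinalities of the four parts.
  have cJB : p + B.card = k := by
    rw [← card_ranked hI, ← uJB, card_union_of_disjoint dJB]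
  have cJC : p + C.card = k := by
    rw [← card_ranked hI', ← uJC, card_union_of_disjoint dJC]
  have hBr : B.card = r := by omega
  have hCr : C.card = r := by omega
  have hDm : D.card = m := by
    rw [hD, card_compl, Fintype.card_fin]; rfl
  have hn : n - k = m + r := by
    have h := congrArg Finset.card uD
    rw [card_union_of_disjoint dD, card_union_of_disjoint dBC, card_union_of_disjoint dJB,
      card_univ, Fintype.card_fin] at h
    change p + _ + _ + _ = n at h
    omega
  have tB := sum_tilde hI dJB uJB
  have tC := sum_tilde hI' dJC uJC
  -- The rows of the double sum, by the class of `x`.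
  have rowJ : ∑ x ∈ J, ∑ y, precProb I x y * precProb I' y x
      = ∑ x ∈ J, ∑ y ∈ J, (if pos1 I x < pos1 I y then (1 : ℝ) else 0)
          * (if pos1 I' y < pos1 I' x then 1 else 0)
        + ∑ x ∈ C, ∑ y ∈ J, (if pos1 I' x < pos1 I' y then (1 : ℝ) else 0) := by
    rw [sum_comm (s := C), ← sum_add_distrib]
    refine sum_congr rfl fun x hx => ?_
    rw [mJ] at hx
    have e1 : ∑ y ∈ J, precProb I x y * precProb I' y x
        = ∑ y ∈ J, (if pos1 I x < pos1 I y then (1 : ℝ) else 0)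
          * (if pos1 I' y < pos1 I' x then 1 else 0) :=
      sum_congr rfl fun y hy => by rw [mJ] at hy; simp [precProb, hx, hy]
    have e2 : ∑ y ∈ B, precProb I x y * precProb I' y x = 0 :=
      sum_eq_zero fun y hy => by rw [mB] at hy; simp [precProb, hx, hy]
    have e3 : ∑ y ∈ C, precProb I x y * precProb I' y x
        = ∑ y ∈ C, (if pos1 I' y < pos1 I' x then (1 : ℝ) else 0) :=
      sum_congr rfl fun y hy => by rw [mC] at hy; simp [precProb, hx, hy]
    have e4 : ∑ y ∈ D, precProb I x y * precProb I' y x = 0 :=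
      sum_eq_zero fun y hy => by rw [mD] at hy; simp [precProb, hx, hy]
    rw [split, e1, e2, e3, e4]
    ring
  have rowB : ∑ x ∈ B, ∑ y, precProb I x y * precProb I' y x
      = ∑ x ∈ B, ∑ y ∈ J, (if pos1 I x < pos1 I y then (1 : ℝ) else 0)
        + (1 / 2) * ∑ x ∈ B, ∑ y ∈ B, (if pos1 I x < pos1 I y then (1 : ℝ) else 0)
        + r * r + r * m / 2 := by
    have hx' : ∀ x ∈ B, ∑ y, precProb I x y * precProb I' y x
        = ∑ y ∈ J, (if pos1 I x < pos1 I y then (1 : ℝ) else 0)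
          + (1 / 2) * ∑ y ∈ B, (if pos1 I x < pos1 I y then (1 : ℝ) else 0) + (r + m / 2) := by
      intro x hx
      rw [mB] at hx
      have e1 : ∑ y ∈ J, precProb I x y * precProb I' y x
          = ∑ y ∈ J, (if pos1 I x < pos1 I y then (1 : ℝ) else 0) :=
        sum_congr rfl fun y hy => by rw [mJ] at hy; simp [precProb, hx, hy]
      have e2 : ∑ y ∈ B, precProb I x y * precProb I' y x
          = (1 / 2) * ∑ y ∈ B, (if pos1 I x < pos1 I y then (1 : ℝ) else 0) := by
        rw [mul_sum]
        refine sum_congr rfl fun y hy => ?_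
        rw [mB] at hy
        by_cases hyx : y = x
        · subst hyx; simp [precProb]
        · simp [precProb, hx, hy, hyx]
      have e3 : ∑ y ∈ C, precProb I x y * precProb I' y x = r := by
        rw [← hCr, card_eq_sum_ones, Nat.cast_sum]
        exact sum_congr rfl fun y hy => by rw [mC] at hy; simp [precProb, hx, hy]
      have e4 : ∑ y ∈ D, precProb I x y * precProb I' y x = m / 2 := by
        rw [← hDm, card_eq_sum_ones, Nat.cast_sum, sum_div]
        refine sum_congr rfl fun y hy => ?_
        rw [mD] at hy
        have hyx : y ≠ x := by rintro rfl; tauto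
        simp [precProb, hx, hy, hyx]
      rw [split, e1, e2, e3, e4]
      ring
    rw [sum_congr rfl hx', sum_add_distrib, sum_add_distrib, ← mul_sum, sum_const, hBr]
    simp only [nsmul_eq_mul]
    ring
  have rowC : ∑ x ∈ C, ∑ y, precProb I x y * precProb I' y x
      = (1 / 2) * ∑ x ∈ C, ∑ y ∈ C, (if pos1 I' x < pos1 I' y then (1 : ℝ) else 0) := by
    rw [sum_comm (s := C) (t := C), mul_sum]
    refine sum_congr rfl fun x hx => ?_
    rw [mC] at hx
    have e1 : ∑ y ∈ J, precProb I x y * precProb I' y x = 0 :=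
      sum_eq_zero fun y hy => by rw [mJ] at hy; simp [precProb, hx, hy]
    have e2 : ∑ y ∈ B, precProb I x y * precProb I' y x = 0 :=
      sum_eq_zero fun y hy => by rw [mB] at hy; simp [precProb, hx, hy]
    have e3 : ∑ y ∈ C, precProb I x y * precProb I' y x
        = (1 / 2) * ∑ y ∈ C, (if pos1 I' y < pos1 I' x then (1 : ℝ) else 0) := by
      rw [mul_sum]
      refine sum_congr rfl fun y hy => ?_
      rw [mC] at hy
      by_cases hyx : x = y
      · subst hyx; simp [precProb]
      · simp [precProb, hx, hy, hyx]
    have e4 : ∑ y ∈ D, precProb I x y * precProb I' y x = 0 :=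
      sum_eq_zero fun y hy => by rw [mD] at hy; simp [precProb, hx, hy]
    rw [split, e1, e2, e3, e4]
    ring
  have rowD : ∑ x ∈ D, ∑ y, precProb I x y * precProb I' y x
      = r * m / 2 + m * (m - 1) / 4 := by
    have hx' : ∀ x ∈ D, ∑ y, precProb I x y * precProb I' y x
        = (r : ℝ) / 2 + ((m : ℝ) - 1) / 4 := by
      intro x hx
      have hxD := hx
      rw [mD] at hx
      have e1 : ∑ y ∈ J, precProb I x y * precProb I' y x = 0 :=
        sum_eq_zero fun y hy => by rw [mJ] at hy; simp [precProb, hx, hy]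
      have e2 : ∑ y ∈ B, precProb I x y * precProb I' y x = 0 :=
        sum_eq_zero fun y hy => by rw [mB] at hy; simp [precProb, hx, hy]
      have e3 : ∑ y ∈ C, precProb I x y * precProb I' y x = r / 2 := by
        rw [← hCr, card_eq_sum_ones, Nat.cast_sum, sum_div]
        refine sum_congr rfl fun y hy => ?_
        rw [mC] at hy
        have hyx : x ≠ y := by rintro rfl; tauto
        simp [precProb, hx, hy, hyx]
      have e4 : ∑ y ∈ D, precProb I x y * precProb I' y x = ((m : ℝ) - 1) / 4 := by
        have : ∀ y ∈ D, precProb I x y * precProb I' y x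
            = (1 / 4 : ℝ) - if x = y then 1 / 4 else 0 := by
          intro y hy
          rw [mD] at hy
          by_cases hyx : x = y
          · subst hyx; simp [precProb]
          · simp [precProb, hx, hy, hyx, Ne.symm hyx]; norm_num
        rw [sum_congr rfl this, sum_sub_distrib, sum_const, sum_ite_eq, if_pos hxD, hDm]
        simp only [nsmul_eq_mul]
        ring
      rw [split, e1, e2, e3, e4]
      ring
    rw [sum_congr rfl hx', sum_const, hDm]
    simp only [nsmul_eq_mul]
    ring
  rw [split, rowJ, rowB, rowC, rowD, hn, Nat.cast_choose_two, Nat.cast_choose_two]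
  rw [hBr] at tB
  rw [hCr] at tC
  push_cast
  linarith
end

section
/- Let γ = (γ_1,…,γ_k) be positive integers with Σ_{j=1}^k γ_j = n, let Γ_j = {Σ_{l<j} γ_l + 1, …, Σ_{l≤j} γ_l}, and for 1 ≤ l ≤ n let Γ(l) denote the unique j with l ∈ Γ_j. Let S_γ = {σ ∈ S_n : σ(Γ_j) = Γ_j for all j}. Let π_1, π_2 ∈ S_n and let R_1, R_2 be the partial rankings with compatible sets E_{R_1} = S_γ·π_1 and E_{R_2} = S_γ·π_2. Then the average Hamming distance equals d_{H,avg}(R_1,R_2) = #{i ∈ {1,…,n} : Γ(π_1(i)) ≠ Γ(π_2(i))} + Σ_{j=1}^k a_j·(γ_j−1)/γ_j, where a_j = #{i ∈ {1,…,n} : π_1(i) ∈ Γ_j and π_2(i) ∈ Γ_j}. Equivalently, if s and s' are independent uniform random elements of S_γ, then E[d_H(s∘π_1, s'∘π_2)] equals the above expression. -/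
/-!
By linearity of expectation the average distance is the sum over `i` of the probability that
`s (π₁ i) ≠ s' (π₂ i)`, with `s, s'` independent and uniform on `S_γ`. Elements of `S_γ` are the
permutations that preserve the block index (`mem_SgammaSet_iff`). If `π₁ i` and `π₂ i` lie in
different blocks, this probability is `1`. If they lie in the same block `Γ_j`, then for each fixed
`s'` the point `s (π₁ i)` is uniform on `Γ_j`, since left multiplication by the transposition of
two points of `Γ_j` permutes `S_γ` (`card_fiber_mul`); hence the probability is `1 - 1 / γ_j`.
Summing over `i` and sorting the indices by block gives the formula.
-/

open Finset

/-- The subgroup `S_γ` of permutations letting each block `Γ_j` invariant, as a finite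
set of permutations. -/
def SgammaSet {n k : ℕ} (Γ : Fin k → Finset (Fin n)) : Finset (Equiv.Perm (Fin n)) :=
  Finset.univ.filter fun σ => ∀ j, (Γ j).image σ = Γ j

/-- The right coset `S·π` of a finite set of permutations. -/
def rightCoset' {n : ℕ} (S : Finset (Equiv.Perm (Fin n))) (π : Equiv.Perm (Fin n)) :
    Finset (Equiv.Perm (Fin n)) :=
  S.image fun s => s * π

lemma mem_SgammaSet_iff {n k : ℕ} {Γ : Fin k → Finset (Fin n)} {Γidx : Fin n → Fin k}
    (hΓidx : ∀ (i : Fin n) (j : Fin k), Γidx i = j ↔ i ∈ Γ j) (σ : Equiv.Perm (Fin n)) :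
    σ ∈ SgammaSet Γ ↔ ∀ x, Γidx (σ x) = Γidx x := by
  simp only [SgammaSet, mem_filter, mem_univ, true_and]
  constructor
  · intro h x
    rw [hΓidx, ← h]
    exact mem_image_of_mem _ ((hΓidx _ _).1 rfl)
  · intro h j
    apply Finset.eq_of_subset_of_card_le
    · intro y hy
      obtain ⟨x, hx, rfl⟩ := mem_image.1 hy
      rw [← hΓidx] at hx ⊢
      rw [h, hx]
    · rw [card_image_of_injective _ σ.injective]

/-- For `x` and `z` in the same block, a fraction `1 / |block|` of `S_γ` sends `x` to `z`. -/
lemma card_fiber_mul {n k : ℕ} {Γ : Fin k → Finset (Fin n)} {Γidx : Fin n → Fin k}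
    (hΓidx : ∀ (i : Fin n) (j : Fin k), Γidx i = j ↔ i ∈ Γ j) (x z : Fin n)
    (hxz : Γidx z = Γidx x) :
    (Γ (Γidx x)).card * ((SgammaSet Γ).filter fun s => s x = z).card = (SgammaSet Γ).card := by
  have hmaps : ∀ s ∈ SgammaSet Γ, s x ∈ Γ (Γidx x) := fun s hs =>
    (hΓidx _ _).1 ((mem_SgammaSet_iff hΓidx s).1 hs x)
  rw [Finset.card_eq_sum_card_fiberwise hmaps, Finset.sum_const_nat]
  intro w hw
  have hwz : Γidx w = Γidx z := ((hΓidx _ _).2 hw).trans hxz.symm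
  have hswap : ∀ y, Γidx (Equiv.swap z w y) = Γidx y := by
    intro y
    rw [Equiv.swap_apply_def]
    split_ifs with h1 h2
    · rw [h1, hwz]
    · rw [h2, hwz]
    · rfl
  refine Finset.card_bij' (fun s _ => Equiv.swap z w * s) (fun s _ => Equiv.swap z w * s)
    ?_ ?_ ?_ ?_
  · intro s hs
    simp only [mem_filter, mem_SgammaSet_iff hΓidx, Equiv.Perm.mul_apply, hswap] at hs ⊢
    exact ⟨hs.1, by simp [hs.2]⟩
  · intro s hs
    simp only [mem_filter, mem_SgammaSet_iff hΓidx, Equiv.Perm.mul_apply, hswap] at hs ⊢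
    exact ⟨hs.1, by simp [hs.2]⟩
  · intro s _
    simp
  · intro s _
    simp

lemma card_block {n k : ℕ} {γ : Fin k → ℕ} (hsum : ∑ j, γ j = n) (j : Fin k) :
    (Finset.univ.filter fun i : Fin n =>
      (∑ l ∈ Finset.univ.filter fun l : Fin k => l < j, γ l) ≤ (i : ℕ) ∧
        (i : ℕ) < ∑ l ∈ Finset.univ.filter fun l : Fin k => l ≤ j, γ l).card = γ j := by
  have h1 : (∑ l ∈ Finset.univ.filter fun l : Fin k => l ≤ j, γ l) =
      γ j + ∑ l ∈ Finset.univ.filter fun l : Fin k => l < j, γ l := by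
    rw [← Finset.sum_insert (by simp)]
    congr 1
    ext l
    simp [le_iff_eq_or_lt]
  have h2 : (∑ l ∈ Finset.univ.filter fun l : Fin k => l ≤ j, γ l) ≤ n := by
    rw [← hsum]
    exact Finset.sum_le_sum_of_subset (Finset.filter_subset _ _)
  rw [h1] at h2 ⊢
  generalize (∑ l ∈ Finset.univ.filter fun l : Fin k => l < j, γ l) = a at *
  rw [← Finset.card_map Fin.valEmbedding]
  have h3 : (Finset.univ.filter fun i : Fin n => a ≤ (i : ℕ) ∧ (i : ℕ) < γ j + a).map
      Fin.valEmbedding = Finset.Ico a (γ j + a) := by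
    ext m
    simp only [mem_map, mem_filter, mem_univ, true_and, Fin.valEmbedding_apply, mem_Ico]
    constructor
    · rintro ⟨i, hi, rfl⟩
      exact hi
    · intro hm
      exact ⟨⟨m, by omega⟩, hm, rfl⟩
  rw [h3]
  simp

/-- The number of `s ∈ S_γ` with `s x ≠ s' y`, for a fixed `s' ∈ S_γ`; it does not depend on
`s'`. -/
lemma sum_indicator_ne {n k : ℕ} {γ : Fin k → ℕ} (hγ : ∀ j, 0 < γ j)
    {Γ : Fin k → Finset (Fin n)} {Γidx : Fin n → Fin k}
    (hΓidx : ∀ (i : Fin n) (j : Fin k), Γidx i = j ↔ i ∈ Γ j) (hcard : ∀ j, (Γ j).card = γ j)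
    (x y : Fin n) (s' : Equiv.Perm (Fin n)) (hs' : s' ∈ SgammaSet Γ) :
    (∑ s ∈ SgammaSet Γ, if s x ≠ s' y then (1 : ℝ) else 0) =
      (SgammaSet Γ).card *
        (if Γidx x ≠ Γidx y then 1 else ((γ (Γidx x) : ℝ) - 1) / γ (Γidx x)) := by
  have hs'y := (mem_SgammaSet_iff hΓidx s').1 hs' y
  split_ifs with h
  · rw [Finset.sum_congr rfl (g := fun _ => (1 : ℝ))]
    · simp
    · intro s hs
      have := (mem_SgammaSet_iff hΓidx s).1 hs x
      rw [if_pos]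
      intro he
      rw [he, hs'y] at this
      exact h this.symm
  · rw [not_not] at h
    have hf := card_fiber_mul hΓidx x (s' y) (hs'y.trans h.symm)
    rw [hcard] at hf
    have hsplit := Finset.card_filter_add_card_filter_not (s := SgammaSet Γ)
      (fun s => s x = s' y)
    rw [Finset.sum_boole]
    have hγ0 : (γ (Γidx x) : ℝ) ≠ 0 := by exact_mod_cast (hγ _).ne'
    rw [← mul_div_assoc, eq_div_iff hγ0]
    have hf' : (γ (Γidx x) : ℝ) * ((SgammaSet Γ).filter fun s => s x = s' y).card =
      (SgammaSet Γ).card := by exact_mod_cast hf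
    have hsplit' : (((SgammaSet Γ).filter fun s => s x = s' y).card : ℝ) +
      ((SgammaSet Γ).filter fun s => ¬ s x = s' y).card = (SgammaSet Γ).card := by
      exact_mod_cast hsplit
    simp only [ne_eq]
    linear_combination (γ (Γidx x) : ℝ) * hsplit' - hf'

/-- Proposition 4: the average Hamming distance between the partial rankings with
compatible sets `S_γ π₁` and `S_γ π₂` equals
`#{i : Γ(π₁(i)) ≠ Γ(π₂(i))} + Σ_j a_j (γ_j − 1)/γ_j`,
where `a_j = #{i : π₁(i) ∈ Γ_j and π₂(i) ∈ Γ_j}`. -/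
theorem davg_hamming_ordered_partition (n k : ℕ) (γ : Fin k → ℕ) (hγ : ∀ j, 0 < γ j)
    (hsum : ∑ j, γ j = n) (Γ : Fin k → Finset (Fin n))
    (hΓ : ∀ j : Fin k, Γ j = Finset.univ.filter fun i : Fin n =>
      (∑ l ∈ Finset.univ.filter fun l : Fin k => l < j, γ l) ≤ (i : ℕ) ∧
        (i : ℕ) < ∑ l ∈ Finset.univ.filter fun l : Fin k => l ≤ j, γ l)
    (Γidx : Fin n → Fin k) (hΓidx : ∀ (i : Fin n) (j : Fin k), Γidx i = j ↔ i ∈ Γ j)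
    (π₁ π₂ : Equiv.Perm (Fin n)) :
    davgSets permHammingDist (rightCoset' (SgammaSet Γ) π₁) (rightCoset' (SgammaSet Γ) π₂) =
      ((Finset.univ.filter fun i : Fin n => Γidx (π₁ i) ≠ Γidx (π₂ i)).card : ℝ)
      + ∑ j : Fin k,
          ((Finset.univ.filter fun i : Fin n => π₁ i ∈ Γ j ∧ π₂ i ∈ Γ j).card : ℝ)
            * ((γ j : ℝ) - 1) / (γ j : ℝ) := by
  have hcard : ∀ j, (Γ j).card = γ j := fun j => by rw [hΓ, card_block hsum]
  -- `c i` is the probability that the two random permutations differ at `i`.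
  set c : Fin n → ℝ := fun i => if Γidx (π₁ i) ≠ Γidx (π₂ i) then 1 else
    ((γ (Γidx (π₁ i)) : ℝ) - 1) / γ (Γidx (π₁ i)) with hc
  have hS : ((SgammaSet Γ).card : ℝ) ≠ 0 := by
    have h1 : (1 : Equiv.Perm (Fin n)) ∈ SgammaSet Γ := by simp [mem_SgammaSet_iff hΓidx]
    exact_mod_cast (Finset.card_pos.2 ⟨1, h1⟩).ne'
  have hL : davgSets permHammingDist (rightCoset' (SgammaSet Γ) π₁)
      (rightCoset' (SgammaSet Γ) π₂) = ∑ i, c i := by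
    have hinj : ∀ π : Equiv.Perm (Fin n), Function.Injective fun s => s * π :=
      fun π => mul_left_injective π
    have hd : ∀ s s' : Equiv.Perm (Fin n), (permHammingDist (s * π₁) (s' * π₂) : ℝ) =
        ∑ i : Fin n, if s (π₁ i) ≠ s' (π₂ i) then (1 : ℝ) else 0 := by
      intro s s'
      rw [permHammingDist, Finset.natCast_card_filter]
      rfl
    unfold davgSets rightCoset'
    rw [Finset.card_image_of_injective _ (hinj π₁), Finset.card_image_of_injective _ (hinj π₂),
      Finset.sum_image (fun _ _ _ _ h => hinj π₁ h), div_eq_iff (mul_ne_zero hS hS)]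
    simp only [Finset.sum_image (fun _ _ _ _ h => hinj π₂ h), hd]
    rw [Finset.sum_comm]
    have hinner : ∀ s' ∈ SgammaSet Γ, (∑ s ∈ SgammaSet Γ, ∑ i : Fin n,
        if s (π₁ i) ≠ s' (π₂ i) then (1 : ℝ) else 0) = (SgammaSet Γ).card * ∑ i, c i := by
      intro s' hs'
      rw [Finset.sum_comm, Finset.mul_sum]
      exact Finset.sum_congr rfl fun i _ =>
        sum_indicator_ne hγ hΓidx hcard (π₁ i) (π₂ i) s' hs'
    rw [Finset.sum_congr rfl hinner, Finset.sum_const, nsmul_eq_mul]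
    ring
  rw [hL]
  simp only [mul_div_assoc]
  simp only [Finset.natCast_card_filter, Finset.sum_mul]
  rw [Finset.sum_comm, ← Finset.sum_add_distrib]
  refine Finset.sum_congr rfl fun i _ => ?_
  simp only [← hΓidx, hc, ite_mul, one_mul, zero_mul]
  by_cases h : Γidx (π₁ i) = Γidx (π₂ i)
  · simp [h]
  · have h0 : ∀ j, ¬ (Γidx (π₁ i) = j ∧ Γidx (π₂ i) = j) := fun j hj => h (hj.1.trans hj.2.symm)
    simp [h, h0]
end

section
/- Let d be one of the Kendall tau, Hamming, Spearman footrule or Spearman rank correlation distances on S_∞, let (σ_i)_{i≥1} be a sequence in S_∞ satisfying Conditions 1 and 2, let Θ = Π_{i=1}^3 [θ_{i,min},θ_{i,max}] with 0 < θ_{i,min} ≤ θ_{i,max} < ∞, and let θ* ∈ Θ. Then for every α > 0, liminf_{n→∞} inf_{θ ∈ Θ, ‖θ−θ*‖ ≥ α} (1/n) Σ_{i=1}^n Σ_{j=1}^n (K'_θ(σ_i,σ_j) − K'_{θ*}(σ_i,σ_j))² > 0, where ‖·‖ is the Euclidean norm on ℝ³. -/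
/-!
The argument uses only two properties shared by the four distances: `d s s = 0`, and the relaxed
triangle inequality `d x z ≤ 2 (d x y + d y z)` (the factor `2` is needed for the sum of squares
`dS2` only).

By Condition 1, `σ` is injective along the sequence, and there is a fixed lag `k ≥ 2` with
`d (σ i) (σ (i + k)) ≥ c + 1`, where `c` is the constant of Condition 2. Iterating the relaxed
triangle inequality bounds `d (σ i) (σ (i + k))` by a constant `C` independent of `i`. Hence row `i`
of the double sum contains the three terms `j = i, i + 1, i + k`, whose sum is `gap θ* (θ, a, b)` for
some `a ∈ [0, c]` and `b ∈ [c + 1, C]`. As `a ≠ b`, the three terms determine `θ`: the two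
off-diagonal ones vanish only if `θ₁ = θ₁*` and `θ₂ = θ₂*`, and then the diagonal one forces
`θ₃ = θ₃*`. By compactness of the parameter box, `gap` is bounded below by a positive constant when
`‖θ - θ*‖ ≥ α` (`exists_gap_lower_bound`). Summing over the `n - k` rows `i < n - k` and using
`n - k ≥ n / 2` gives the result.
-/

open scoped Classical

/-- `S_∞`: the group of finitely supported permutations of `ℕ`. -/
def SInf : Type := {σ : Equiv.Perm ℕ // {i | σ i ≠ i}.Finite}

namespace SInf

/-- Kendall's tau distance on `S_∞`. -/
noncomputable def dKen (π σ : SInf) : ℝ :=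
  ({p : ℕ × ℕ | p.1 < p.2 ∧
    ((σ.1 p.2 < σ.1 p.1 ∧ π.1 p.1 < π.1 p.2) ∨
      (σ.1 p.1 < σ.1 p.2 ∧ π.1 p.2 < π.1 p.1))}).ncard

/-- Hamming distance on `S_∞`. -/
noncomputable def dHam (π σ : SInf) : ℝ := ({i : ℕ | π.1 i ≠ σ.1 i}).ncard

/-- Spearman's footrule distance on `S_∞`. -/
noncomputable def dFoot (π σ : SInf) : ℝ := ∑' i : ℕ, |(π.1 i : ℝ) - (σ.1 i : ℝ)|

/-- Spearman's rank correlation distance on `S_∞`. -/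
noncomputable def dS2 (π σ : SInf) : ℝ := ∑' i : ℕ, ((π.1 i : ℝ) - (σ.1 i : ℝ)) ^ 2

/-- Condition 1: `d(σ_i, σ_j) ≥ |i − j|^β` for some `β > 0`. -/
def Cond1 (d : SInf → SInf → ℝ) (σ : ℕ → SInf) : Prop :=
  ∃ β : ℝ, 0 < β ∧ ∀ i j : ℕ, |(i : ℝ) - (j : ℝ)| ^ β ≤ d (σ i) (σ j)

/-- Condition 2: `d(σ_i, σ_{i+1}) ≤ c` for some `c > 0`. -/
def Cond2 (d : SInf → SInf → ℝ) (σ : ℕ → SInf) : Prop :=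
  ∃ c : ℝ, 0 < c ∧ ∀ i : ℕ, d (σ i) (σ (i + 1)) ≤ c

/-- The covariance kernel `K'_θ(σ,σ') = θ₂ exp(−θ₁ d(σ,σ')) + θ₃ 1_{σ=σ'}`,
for `θ = (θ 0, θ 1, θ 2)`. -/
noncomputable def Kp (d : SInf → SInf → ℝ) (θ : Fin 3 → ℝ) (s s' : SInf) : ℝ :=
  θ 1 * Real.exp (-(θ 0) * d s s') + (if s = s' then θ 2 else 0)

end SInf

namespace SInf

/-! ### Common properties of the four distances -/

lemma finite_ne (x y : SInf) : {i : ℕ | x.1 i ≠ y.1 i}.Finite := by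
  refine (x.2.union y.2).subset ?_
  intro i hi
  by_contra h
  simp only [Set.mem_union, Set.mem_ofPred_eq, not_or, not_not] at h
  exact hi (h.1.trans h.2.symm)

/-- Finitely supported permutations eventually fix everything, and preserve the initial segment
below that point. -/
lemma exists_bound (x : SInf) :
    ∃ N : ℕ, ∀ M, N ≤ M → (∀ i, M ≤ i → x.1 i = i) ∧ ∀ i, i < M → x.1 i < M := by
  obtain ⟨B, hB⟩ := x.2.bddAbove
  have hfix : ∀ i, B + 1 ≤ i → x.1 i = i := by
    intro i hi
    by_contra h
    have : i ≤ B := hB h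
    omega
  refine ⟨B + 1, fun M hM => ⟨fun i hi => hfix i (hM.trans hi), fun i hi => ?_⟩⟩
  by_contra h
  have h' : x.1 (x.1 i) = x.1 i := hfix _ (by omega)
  have := x.1.injective h'
  omega

lemma finite_ken (x y : SInf) : {p : ℕ × ℕ | p.1 < p.2 ∧
    ((y.1 p.2 < y.1 p.1 ∧ x.1 p.1 < x.1 p.2) ∨
      (y.1 p.1 < y.1 p.2 ∧ x.1 p.2 < x.1 p.1))}.Finite := by
  obtain ⟨N₁, h₁⟩ := exists_bound x
  obtain ⟨N₂, h₂⟩ := exists_bound y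
  obtain ⟨hx, hx'⟩ := h₁ (max N₁ N₂) (le_max_left _ _)
  obtain ⟨hy, hy'⟩ := h₂ (max N₁ N₂) (le_max_right _ _)
  generalize max N₁ N₂ = M at *
  refine ((Set.finite_Iio M).prod (Set.finite_Iio M)).subset ?_
  rintro ⟨i, j⟩ ⟨hij, h⟩
  simp only at hij h
  suffices j < M from ⟨hij.trans this, this⟩
  by_contra hj
  push Not at hj
  rw [hx j hj, hy j hj] at h
  rcases lt_or_ge i M with hi | hi
  · have := hx' i hi
    have := hy' i hi
    omega
  · rw [hx i hi, hy i hi] at h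
    omega

lemma dKen_nonneg (x y : SInf) : 0 ≤ dKen x y := Nat.cast_nonneg _

lemma dHam_nonneg (x y : SInf) : 0 ≤ dHam x y := Nat.cast_nonneg _

lemma dKen_self (x : SInf) : dKen x x = 0 := by
  have : {p : ℕ × ℕ | p.1 < p.2 ∧
    ((x.1 p.2 < x.1 p.1 ∧ x.1 p.1 < x.1 p.2) ∨
      (x.1 p.1 < x.1 p.2 ∧ x.1 p.2 < x.1 p.1))} = ∅ := by
    ext p
    simp only [Set.mem_ofPred_eq, Set.mem_empty_iff_false, iff_false]
    omega
  simp only [dKen, this, Set.ncard_empty, Nat.cast_zero]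

lemma dKen_triangle (x y z : SInf) : dKen x z ≤ dKen x y + dKen y z := by
  unfold dKen
  rw [← Nat.cast_add, Nat.cast_le]
  refine le_trans (Set.ncard_le_ncard ?_ ((finite_ken x y).union (finite_ken y z)))
    (Set.ncard_union_le _ _)
  rintro ⟨i, j⟩ ⟨hij, h⟩
  have hne : y.1 i ≠ y.1 j := fun h => hij.ne (y.1.injective h)
  simp only [Set.mem_union, Set.mem_ofPred_eq] at *
  omega

lemma dHam_triangle (x y z : SInf) : dHam x z ≤ dHam x y + dHam y z := by
  unfold dHam
  rw [← Nat.cast_add, Nat.cast_le]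
  refine le_trans (Set.ncard_le_ncard ?_ ((finite_ne x y).union (finite_ne y z)))
    (Set.ncard_union_le _ _)
  intro i hi
  simp only [Set.mem_union, Set.mem_ofPred_eq] at *
  omega

lemma summable_foot (x y : SInf) : Summable fun i : ℕ => |(x.1 i : ℝ) - (y.1 i : ℝ)| := by
  refine summable_of_hasFiniteSupport ((finite_ne x y).subset fun i hi h => hi ?_)
  simp [h]

lemma summable_S2 (x y : SInf) : Summable fun i : ℕ => ((x.1 i : ℝ) - (y.1 i : ℝ)) ^ 2 := by
  refine summable_of_hasFiniteSupport ((finite_ne x y).subset fun i hi h => hi ?_)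
  simp [h]

lemma dFoot_nonneg (x y : SInf) : 0 ≤ dFoot x y := tsum_nonneg fun _ => abs_nonneg _

lemma dFoot_triangle (x y z : SInf) : dFoot x z ≤ dFoot x y + dFoot y z := by
  unfold dFoot
  rw [← (summable_foot x y).tsum_add (summable_foot y z)]
  exact (summable_foot x z).tsum_le_tsum (fun i => abs_sub_le _ _ _)
    ((summable_foot x y).add (summable_foot y z))

lemma dS2_triangle (x y z : SInf) : dS2 x z ≤ 2 * (dS2 x y + dS2 y z) := by
  unfold dS2
  rw [← (summable_S2 x y).tsum_add (summable_S2 y z), ← tsum_mul_left]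
  refine (summable_S2 x z).tsum_le_tsum (fun i => ?_)
    (((summable_S2 x y).add (summable_S2 y z)).mul_left 2)
  nlinarith [sq_nonneg (((x.1 i : ℝ) - y.1 i) - ((y.1 i : ℝ) - z.1 i))]

lemma dist_self {d : SInf → SInf → ℝ} (hd : d = dKen ∨ d = dHam ∨ d = dFoot ∨ d = dS2)
    (x : SInf) : d x x = 0 := by
  rcases hd with rfl | rfl | rfl | rfl
  · exact dKen_self x
  · simp [dHam]
  · simp [dFoot]
  · simp [dS2]

lemma dist_triangle {d : SInf → SInf → ℝ} (hd : d = dKen ∨ d = dHam ∨ d = dFoot ∨ d = dS2)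
    (x y z : SInf) : d x z ≤ 2 * (d x y + d y z) := by
  rcases hd with rfl | rfl | rfl | rfl
  · linarith [dKen_triangle x y z, dKen_nonneg x y, dKen_nonneg y z]
  · linarith [dHam_triangle x y z, dHam_nonneg x y, dHam_nonneg y z]
  · linarith [dFoot_triangle x y z, dFoot_nonneg x y, dFoot_nonneg y z]
  · exact dS2_triangle x y z

/-- Under Condition 2, points at a fixed lag `k` stay at bounded distance. -/
lemma exists_lag_bound {d : SInf → SInf → ℝ} (hself : ∀ x, d x x = 0)
    (htri : ∀ x y z, d x z ≤ 2 * (d x y + d y z)) {σ : ℕ → SInf} {c : ℝ}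
    (hc : ∀ i, d (σ i) (σ (i + 1)) ≤ c) (k : ℕ) : ∃ C : ℝ, ∀ i, d (σ i) (σ (i + k)) ≤ C := by
  induction k with
  | zero => exact ⟨0, fun i => (hself _).le⟩
  | succ k ih =>
    obtain ⟨C, hC⟩ := ih
    refine ⟨2 * (C + c), fun i => ?_⟩
    have := htri (σ i) (σ (i + k)) (σ (i + (k + 1)))
    have h2 : d (σ (i + k)) (σ (i + (k + 1))) ≤ c := hc (i + k)
    linarith [hC i]

/-! ### Identifiability and compactness -/

/-- The sum of the squared kernel discrepancies between the parameters `p.1` and `θs` at a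
coincident pair, at a pair at distance `p.2.1`, and at a pair at distance `p.2.2`. -/
noncomputable def gap (θs : EuclideanSpace ℝ (Fin 3)) (p : EuclideanSpace ℝ (Fin 3) × ℝ × ℝ) : ℝ :=
  ((p.1 1 + p.1 2) - (θs 1 + θs 2)) ^ 2 +
    ((p.1 1 * Real.exp (-(p.1 0) * p.2.1) - θs 1 * Real.exp (-(θs 0) * p.2.1)) ^ 2 +
      (p.1 1 * Real.exp (-(p.1 0) * p.2.2) - θs 1 * Real.exp (-(θs 0) * p.2.2)) ^ 2)

lemma continuous_gap (θs : EuclideanSpace ℝ (Fin 3)) : Continuous (gap θs) := by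
  unfold gap
  fun_prop

/-- Two scaled exponentials that agree at two distinct points have the same rate and scale. -/
lemma exp_identifiable {t t' u u' a b : ℝ} (hu : 0 < u) (hu' : 0 < u') (hab : a ≠ b)
    (ha : u * Real.exp (-t * a) = u' * Real.exp (-t' * a))
    (hb : u * Real.exp (-t * b) = u' * Real.exp (-t' * b)) : t = t' ∧ u = u' := by
  have key : ∀ x, u * Real.exp (-t * x) = u' * Real.exp (-t' * x) →
      Real.log u - t * x = Real.log u' - t' * x := by
    intro x hx
    have := congrArg Real.log hx
    rw [Real.log_mul hu.ne' (Real.exp_pos _).ne', Real.log_mul hu'.ne' (Real.exp_pos _).ne',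
      Real.log_exp, Real.log_exp] at this
    linarith
  have h1 := key a ha
  have h2 := key b hb
  have h3 : (t - t') * (a - b) = 0 := by linarith
  have ht : t = t' := by
    rcases mul_eq_zero.1 h3 with h | h
    · linarith
    · exact absurd (by linarith) hab
  subst ht
  exact ⟨rfl, mul_right_cancel₀ (Real.exp_pos _).ne' ha⟩

lemma gap_pos {θs θ : EuclideanSpace ℝ (Fin 3)} {a b : ℝ} (h1 : 0 < θ 1) (h1s : 0 < θs 1)
    (hab : a ≠ b) (hne : θ ≠ θs) : 0 < gap θs (θ, a, b) := by
  have hnn : 0 ≤ gap θs (θ, a, b) := by unfold gap; positivity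
  refine hnn.lt_of_ne fun h0 => hne ?_
  simp only [gap] at h0
  generalize hA : (θ 1 + θ 2) - (θs 1 + θs 2) = A at h0
  generalize hB : θ 1 * Real.exp (-(θ 0) * a) - θs 1 * Real.exp (-(θs 0) * a) = B at h0
  generalize hC : θ 1 * Real.exp (-(θ 0) * b) - θs 1 * Real.exp (-(θs 0) * b) = C at h0
  have hA0 : A = 0 := by nlinarith [sq_nonneg A, sq_nonneg B, sq_nonneg C]
  have hB0 : B = 0 := by nlinarith [sq_nonneg A, sq_nonneg B, sq_nonneg C]
  have hC0 : C = 0 := by nlinarith [sq_nonneg A, sq_nonneg B, sq_nonneg C]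
  obtain ⟨e0, e1⟩ := exp_identifiable h1 h1s hab
    (sub_eq_zero.1 (hB.trans hB0)) (sub_eq_zero.1 (hC.trans hC0))
  ext i
  fin_cases i
  · exact e0
  · exact e1
  · show θ 2 = θs 2
    linarith

lemma exists_gap_lower_bound (θmin θmax : Fin 3 → ℝ) (hθmin : ∀ i, 0 < θmin i)
    (θs : EuclideanSpace ℝ (Fin 3)) (hθs : ∀ i, θs i ∈ Set.Icc (θmin i) (θmax i))
    (α : ℝ) (hα : 0 < α) (c C : ℝ) :
    ∃ ε : ℝ, 0 < ε ∧ ∀ θ : EuclideanSpace ℝ (Fin 3), (∀ i, θ i ∈ Set.Icc (θmin i) (θmax i)) →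
      α ≤ ‖θ - θs‖ → ∀ a ∈ Set.Icc 0 c, ∀ b ∈ Set.Icc (c + 1) C, ε ≤ gap θs (θ, a, b) := by
  have hbox : IsCompact {θ : EuclideanSpace ℝ (Fin 3) | ∀ i, θ i ∈ Set.Icc (θmin i) (θmax i)} := by
    have h := (isCompact_univ_pi fun i : Fin 3 => isCompact_Icc (a := θmin i) (b := θmax i))
    have h' := (EuclideanSpace.equiv (Fin 3) ℝ).toHomeomorph.isCompact_preimage.2 h
    convert h' using 1
    ext θ
    exact ⟨fun hθ i _ => hθ i, fun hθ i => hθ i trivial⟩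
  have hcl : IsClosed {θ : EuclideanSpace ℝ (Fin 3) | α ≤ ‖θ - θs‖} :=
    isClosed_le continuous_const (by fun_prop)
  have hS := (hbox.inter_right hcl).prod
    ((isCompact_Icc (a := (0 : ℝ)) (b := c)).prod (isCompact_Icc (a := c + 1) (b := C)))
  obtain ⟨ε, hε, h⟩ := hS.exists_forall_le' (a := 0) (continuous_gap θs).continuousOn (by
    rintro ⟨θ, a, b⟩ ⟨⟨hθ, hαθ⟩, ha, hb⟩
    refine gap_pos ((hθmin 1).trans_le (hθ 1).1) ((hθmin 1).trans_le (hθs 1).1) ?_ ?_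
    · have := ha.2
      have := hb.1
      simp only at *
      intro hab
      linarith
    · intro h
      have h2 : α ≤ ‖θ - θs‖ := hαθ
      rw [h, sub_self, norm_zero] at h2
      linarith)
  exact ⟨ε, hε, fun θ hθ hαθ a ha b hb => h (θ, a, b) ⟨⟨hθ, hαθ⟩, ha, hb⟩⟩

end SInf

/-- Under Conditions 1 and 2, the quantity
`inf_{θ ∈ Θ, ‖θ−θ*‖ ≥ α} (1/n) Σ_{i,j≤n} (K'_θ(σ_i,σ_j) − K'_{θ*}(σ_i,σ_j))²`
is bounded away from `0` for `n` large enough (i.e. its liminf is positive);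
`‖·‖` is the Euclidean norm on `ℝ³`. -/
theorem liminf_inf_quadratic_discrepancy_pos (d : SInf → SInf → ℝ)
    (hd : d = SInf.dKen ∨ d = SInf.dHam ∨ d = SInf.dFoot ∨ d = SInf.dS2)
    (σ : ℕ → SInf) (h1 : SInf.Cond1 d σ) (h2 : SInf.Cond2 d σ)
    (θmin θmax : Fin 3 → ℝ) (hθmin : ∀ i, 0 < θmin i) (hθ : ∀ i, θmin i ≤ θmax i)
    (θstar : EuclideanSpace ℝ (Fin 3)) (hθstar : ∀ i, θstar i ∈ Set.Icc (θmin i) (θmax i))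
    (α : ℝ) (hα : 0 < α) :
    ∃ ε : ℝ, 0 < ε ∧ ∃ N : ℕ, ∀ n : ℕ, N ≤ n →
      ∀ θ : EuclideanSpace ℝ (Fin 3), (∀ i, θ i ∈ Set.Icc (θmin i) (θmax i)) →
        α ≤ ‖θ - θstar‖ →
        ε ≤ (1 / (n : ℝ)) * ∑ i ∈ Finset.range n, ∑ j ∈ Finset.range n,
          (SInf.Kp d θ (σ i) (σ j) - SInf.Kp d θstar (σ i) (σ j)) ^ 2 := by
  have hself := SInf.dist_self hd
  have htri := SInf.dist_triangle hd
  obtain ⟨β, hβ, h1⟩ := h1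
  obtain ⟨c, hc, h2⟩ := h2
  -- a lag `k` at which the distances exceed those at lag `1`
  obtain ⟨k, hk2, hk⟩ : ∃ k : ℕ, 2 ≤ k ∧ c + 1 ≤ (k : ℝ) ^ β :=
    ((Filter.eventually_ge_atTop 2).and
      (((tendsto_rpow_atTop hβ).comp tendsto_natCast_atTop_atTop).eventually_ge_atTop
        (c + 1))).exists
  obtain ⟨C, hC⟩ := SInf.exists_lag_bound hself htri h2 k
  obtain ⟨ε, hε, hgap⟩ :=
    SInf.exists_gap_lower_bound θmin θmax hθmin θstar hθstar α hα c C
  have hlow : ∀ i, c + 1 ≤ d (σ i) (σ (i + k)) := by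
    intro i
    refine hk.trans (le_trans (le_of_eq ?_) (h1 i (i + k)))
    congr 1
    push_cast
    rw [sub_add_cancel_left, abs_neg, Nat.abs_cast]
  have hone : ∀ i, 0 < d (σ i) (σ (i + 1)) := by
    intro i
    have h := h1 i (i + 1)
    push_cast at h
    rw [sub_add_cancel_left, abs_neg, abs_one, Real.one_rpow] at h
    linarith
  have hne1 : ∀ i, σ i ≠ σ (i + 1) := by
    intro i h
    have h' := hone i
    rw [← h, hself] at h'
    exact lt_irrefl _ h'
  have hnek : ∀ i, σ i ≠ σ (i + k) := by
    intro i h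
    have h' := hlow i
    rw [← h, hself] at h'
    linarith
  refine ⟨ε / 2, by positivity, 2 * k, fun n hn θ hθ' hαθ => ?_⟩
  set f : ℕ → ℕ → ℝ := fun i j =>
    (SInf.Kp d θ (σ i) (σ j) - SInf.Kp d θstar (σ i) (σ j)) ^ 2 with hf
  have hf0 : ∀ i j, 0 ≤ f i j := fun i j => sq_nonneg _
  have hrow : ∀ i ∈ Finset.range (n - k), ε ≤ ∑ j ∈ Finset.range n, f i j := by
    intro i hi
    rw [Finset.mem_range] at hi
    have hsub : ({i, i + 1, i + k} : Finset ℕ) ⊆ Finset.range n := by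
      intro j hj
      simp only [Finset.mem_insert, Finset.mem_singleton] at hj
      rw [Finset.mem_range]
      omega
    have hsum : ∑ j ∈ ({i, i + 1, i + k} : Finset ℕ), f i j =
        SInf.gap θstar (θ, d (σ i) (σ (i + 1)), d (σ i) (σ (i + k))) := by
      rw [Finset.sum_insert (by simp; omega), Finset.sum_insert (by simp; omega),
        Finset.sum_singleton]
      simp [hf, SInf.Kp, SInf.gap, hself, hne1, hnek]
    calc ε ≤ _ := hgap θ hθ' hαθ _ ⟨(hone i).le, h2 i⟩ _ ⟨hlow i, hC i⟩
      _ = _ := hsum.symm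
      _ ≤ _ := Finset.sum_le_sum_of_subset_of_nonneg hsub fun j _ _ => hf0 i j
  have htot : ((n - k : ℕ) : ℝ) * ε ≤ ∑ i ∈ Finset.range n, ∑ j ∈ Finset.range n, f i j := by
    calc ((n - k : ℕ) : ℝ) * ε = ∑ i ∈ Finset.range (n - k), ε := by simp
      _ ≤ ∑ i ∈ Finset.range (n - k), ∑ j ∈ Finset.range n, f i j := Finset.sum_le_sum hrow
      _ ≤ _ := Finset.sum_le_sum_of_subset_of_nonneg
        (Finset.range_subset_range.2 (Nat.sub_le n k))
        fun i _ _ => Finset.sum_nonneg fun j _ => hf0 i j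
  have hn0 : (0 : ℝ) < n := by
    have : 0 < n := by omega
    exact_mod_cast this
  have hnk : (n : ℝ) / 2 ≤ ((n - k : ℕ) : ℝ) := by
    rw [Nat.cast_sub (by omega)]
    have : (2 : ℝ) * k ≤ n := by exact_mod_cast hn
    linarith
  rw [one_div, inv_mul_eq_div, le_div_iff₀ hn0]
  nlinarith
end
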